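/- If C is a permutation class containing only finitely many simple permutations, then the generating function of the set of alternating permutations in C is algebraic over ℚ[x]. -/

import Mathlib

/-- A permutation of length `n`. -/
abbrev Perm (n : ℕ) := Equiv.Perm (Fin n)

/-- `σ` is contained in `π`: there is a strictly increasing sequence of indices of `π`
on which `π` is order isomorphic to `σ`. -/
def Contains {m n : ℕ} (σ : Perm m) (π : Perm n) : Prop :=
  ∃ f : Fin m → Fin n, StrictMono f ∧ ∀ s t : Fin m, π (f s) < π (f t) ↔ σ s < σ t

/-- A permutation class: a downset in the containment order. -/
def IsPermClass (C : ∀ n, Set (Perm n)) : Prop :=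
  ∀ ⦃m n : ℕ⦄ (σ : Perm m) (π : Perm n), π ∈ C n → Contains σ π → σ ∈ C m

/-- A set of contiguous values. -/
def IsRange {n : ℕ} (I : Finset (Fin n)) : Prop :=
  ∀ ⦃i j l : Fin n⦄, i ∈ I → l ∈ I → i ≤ j → j ≤ l → j ∈ I

/-- An interval of `π`: a set of contiguous indices mapped to a set of contiguous values. -/
def IsPermInterval {n : ℕ} (π : Perm n) (I : Finset (Fin n)) : Prop :=
  IsRange I ∧ IsRange (I.image π)

/-- A permutation is simple if its only intervals have size `0`, `1`, or `n`. -/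
def IsSimple {n : ℕ} (π : Perm n) : Prop :=
  ∀ I : Finset (Fin n), IsPermInterval π I → I.card ≤ 1 ∨ I.card = n

/-- The set of simple permutations belonging to the class `C` is finite. -/
def FinitelyManySimples (C : ∀ n, Set (Perm n)) : Prop :=
  {p : Σ n : ℕ, Perm n | p.2 ∈ C p.1 ∧ IsSimple p.2}.Finite

/-- The generating function `∑_{n ≥ 1} |S_n| xⁿ` of a set of permutations. -/
noncomputable def genFun (S : ∀ n, Set (Perm n)) : PowerSeries ℚ :=
  PowerSeries.mk fun n => if n = 0 then 0 else (Nat.card (S n) : ℚ)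

/-- A power series `f` is algebraic over `ℚ[x]` if there is a nonzero polynomial
`P(x,y) ∈ ℚ[x][y]` with `P(x,f) = 0`. -/
def IsAlgebraicOverQx (f : PowerSeries ℚ) : Prop :=
  ∃ P : Polynomial (Polynomial ℚ), P ≠ 0 ∧
    Polynomial.eval₂ Polynomial.coeToPowerSeries.ringHom f P = 0

/-- `π` is alternating: no entry (other than the first and last) lies strictly
between its two neighbours. -/
def Alternating {n : ℕ} (π : Perm n) : Prop :=
  ∀ (i : ℕ) (h : i + 2 < n),
    ¬(π ⟨i, by omega⟩ < π ⟨i + 1, by omega⟩ ∧ π ⟨i + 1, by omega⟩ < π ⟨i + 2, h⟩) ∧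
    ¬(π ⟨i + 2, h⟩ < π ⟨i + 1, by omega⟩ ∧ π ⟨i + 1, by omega⟩ < π ⟨i, by omega⟩)

theorem Derivation.map_finset_prod {R A M ι : Type*} [CommRing R] [CommRing A] [AddCommGroup M]
    [Algebra R A] [Module A M] [Module R M] [DecidableEq ι] (D : Derivation R A M)
    (s : Finset ι) (a : ι → A) :
    D (∏ i ∈ s, a i) = ∑ i ∈ s, (∏ j ∈ s.erase i, a j) • D (a i) := by
  induction s using Finset.induction_on with
  | empty => simp
  | insert b s hb ih =>
    rw [Finset.prod_insert hb, D.leibniz, ih, Finset.sum_insert hb, Finset.erase_insert hb,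
      Finset.smul_sum, add_comm]
    congr 1
    refine Finset.sum_congr rfl fun i hi => ?_
    rw [Finset.erase_insert_of_ne (by rintro rfl; exact hb hi), Finset.prod_insert, smul_smul]
    exact fun h => hb (Finset.mem_of_mem_erase h)

/-- The Jacobian matrix of a system of sums of products. -/
def productJacobian {A T : Type*} [CommRing A] [DecidableEq T] {ι : T → Type*}
    [∀ t, Fintype (ι t)] {m : ∀ t, ι t → ℕ} (τ : ∀ t g, Fin (m t g) → T) (f : T → A) :
    Matrix T T A := fun t s =>
  ∑ g, ∑ i, if τ t g i = s then ∏ j ∈ Finset.univ.erase i, f (τ t g j) else 0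

theorem Derivation.eq_zero_of_system {R A M T : Type*} [CommRing R] [CommRing A] [IsDomain A]
    [AddCommGroup M] [Algebra R A] [Module A M] [Module R M] [Module.IsTorsionFree A M] [Fintype T]
    [DecidableEq T] (D : Derivation R A M) {ι : T → Type*} [∀ t, Fintype (ι t)]
    {m : ∀ t, ι t → ℕ} (τ : ∀ t g, Fin (m t g) → T) (f : T → A) (c : T → R)
    (hf : ∀ t, f t = algebraMap R A (c t) + ∑ g, ∏ i, f (τ t g i))
    (hdet : (1 - productJacobian τ f).det ≠ 0) (t : T) : D (f t) = 0 := by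
  have key : ∀ t, D (f t) = ∑ s, productJacobian τ f t s • D (f s) := by
    intro t
    conv_lhs => rw [hf t]
    simp only [map_add, D.map_algebraMap, zero_add, map_sum, D.map_finset_prod, productJacobian,
      Finset.sum_smul]
    rw [Finset.sum_comm]
    refine Finset.sum_congr rfl fun g _ => ?_
    rw [Finset.sum_comm]
    refine Finset.sum_congr rfl fun i _ => ?_
    simp [ite_smul]
  have key2 : ∀ t, ∑ s, (1 - productJacobian τ f) t s • D (f s) = 0 := by
    intro t
    simp only [Matrix.sub_apply, sub_smul, Finset.sum_sub_distrib, ← key t, Matrix.one_apply]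
    simp
  have key3 : (1 - productJacobian τ f).det • D (f t) = 0 := by
    have h : ∀ s, ((1 - productJacobian τ f).adjugate * (1 - productJacobian τ f)) t s =
        if t = s then (1 - productJacobian τ f).det else 0 := by
      intro s
      rw [Matrix.adjugate_mul, Matrix.smul_apply, Matrix.one_apply]
      simp
    calc (1 - productJacobian τ f).det • D (f t)
        = ∑ s, ((1 - productJacobian τ f).adjugate * (1 - productJacobian τ f)) t s • D (f s) := by
          simp [h]
      _ = ∑ r, (1 - productJacobian τ f).adjugate t r •
            ∑ s, (1 - productJacobian τ f) r s • D (f s) := by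
          simp only [Matrix.mul_apply, Finset.sum_smul, Finset.smul_sum, smul_smul]
          rw [Finset.sum_comm]
      _ = 0 := Finset.sum_eq_zero fun r _ => by rw [key2, smul_zero]
  exact (smul_eq_zero.mp key3).resolve_left hdet

theorem isAlgebraic_of_derivation_eq_zero {K L T : Type*} [Field K] [Field L] [Algebra K L]
    [Finite T] (f : T → L)
    (h : ∀ t, KaehlerDifferential.D K (IntermediateField.adjoin K (Set.range f))
      ⟨f t, IntermediateField.subset_adjoin K _ ⟨t, rfl⟩⟩ = 0) (t : T) : IsAlgebraic K (f t) := by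
  set F := IntermediateField.adjoin K (Set.range f) with hF
  have hess : Algebra.EssFiniteType K F := by
    rw [IntermediateField.essFiniteType_iff]
    exact IntermediateField.fg_adjoin_of_finite (Set.finite_range f)
  have hD : ∀ x (hx : x ∈ F), KaehlerDifferential.D K F ⟨x, hx⟩ = 0 := by
    intro x hx
    refine IntermediateField.adjoin_induction K
      (p := fun x hx => KaehlerDifferential.D K F ⟨x, hx⟩ = 0) ?_ ?_ ?_ ?_ ?_ hx
    · rintro _ ⟨t, rfl⟩
      exact h t
    · intro x
      exact (KaehlerDifferential.D K F).map_algebraMap x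
    · intro x y hx hy h1 h2
      have : (⟨x + y, add_mem hx hy⟩ : F) = ⟨x, hx⟩ + ⟨y, hy⟩ := rfl
      rw [this, map_add, h1, h2, add_zero]
    · intro x hx h1
      have : (⟨x⁻¹, inv_mem hx⟩ : F) = (⟨x, hx⟩ : F)⁻¹ := rfl
      rw [this, Derivation.leibniz_inv, h1, smul_zero]
    · intro x y hx hy h1 h2
      have : (⟨x * y, mul_mem hx hy⟩ : F) = ⟨x, hx⟩ * ⟨y, hy⟩ := rfl
      rw [this, Derivation.leibniz, h1, h2, smul_zero, smul_zero, add_zero]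
  have hunr : Algebra.FormallyUnramified K F := by
    refine ⟨(subsingleton_iff_forall_eq 0).mpr fun y => ?_⟩
    have hy : y ∈ Submodule.span F (Set.range (KaehlerDifferential.D K F)) := by
      rw [KaehlerDifferential.span_range_derivation]; trivial
    have h0 : Set.range (KaehlerDifferential.D K F) ⊆ {0} := by
      rintro _ ⟨x, rfl⟩
      exact hD x.1 x.2
    simpa using Submodule.span_mono h0 hy
  have hsep := (Algebra.FormallyUnramified.iff_isSeparable K F).mp hunr
  have := Algebra.IsAlgebraic.isAlgebraic (R := K)
    (⟨f t, IntermediateField.subset_adjoin K _ ⟨t, rfl⟩⟩ : F)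
  exact this.algebraMap (A := L)

theorem isAlgebraic_of_system {T : Type*} [Fintype T] [DecidableEq T] {ι : T → Type*}
    [∀ t, Fintype (ι t)] {m : ∀ t, ι t → ℕ} (hm : ∀ t g, 2 ≤ m t g)
    (τ : ∀ t g, Fin (m t g) → T) (f : T → PowerSeries ℚ) (c : T → Polynomial ℚ)
    (h0 : ∀ t, PowerSeries.constantCoeff (f t) = 0)
    (hf : ∀ t, f t = (c t : PowerSeries ℚ) + ∑ g, ∏ i, f (τ t g i)) (t : T) :
    IsAlgebraic (Polynomial ℚ) (f t) := by
  let K := FractionRing (Polynomial ℚ)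
  let L := FractionRing (PowerSeries ℚ)
  have hinj : Function.Injective (algebraMap (Polynomial ℚ) (PowerSeries ℚ)) :=
    Polynomial.coe_injective ℚ
  have hinjL : Function.Injective (algebraMap (Polynomial ℚ) L) := by
    rw [IsScalarTower.algebraMap_eq (Polynomial ℚ) (PowerSeries ℚ) L]
    exact (IsFractionRing.injective (PowerSeries ℚ) L).comp hinj
  have : FaithfulSMul (Polynomial ℚ) L := (faithfulSMul_iff_algebraMap_injective _ _).mpr hinjL
  let : Algebra K L := FractionRing.liftAlgebra (Polynomial ℚ) L
  have : IsScalarTower (Polynomial ℚ) K L := inferInstance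
  let φ := algebraMap (PowerSeries ℚ) L
  have hφ : Function.Injective φ := IsFractionRing.injective (PowerSeries ℚ) L
  suffices h : IsAlgebraic K (φ (f t)) by
    have := (IsFractionRing.isAlgebraic_iff (Polynomial ℚ) K L).mpr h
    exact (isAlgebraic_algebraMap_iff hφ).mp this
  refine isAlgebraic_of_derivation_eq_zero (fun t => φ (f t)) (fun t => ?_) t
  set F := IntermediateField.adjoin K (Set.range fun t => φ (f t)) with hF
  let fF : T → F := fun t => ⟨φ (f t), IntermediateField.subset_adjoin K _ ⟨t, rfl⟩⟩
  refine Derivation.eq_zero_of_system (KaehlerDifferential.D K F) τ fF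
    (fun t => algebraMap _ K (c t)) (fun t => ?_) ?_ t
  · apply Subtype.ext
    have e1 : φ (c t : PowerSeries ℚ) = algebraMap K L (algebraMap _ K (c t)) := by
      rw [← IsScalarTower.algebraMap_apply (Polynomial ℚ) K L,
        IsScalarTower.algebraMap_apply (Polynomial ℚ) (PowerSeries ℚ) L]
      rfl
    have e2 := congrArg φ (hf t)
    rw [map_add, e1, map_sum] at e2
    simp only [map_prod] at e2
    simp only [fF]
    push_cast
    exact e2
  · intro hdet
    have h1 : (1 - productJacobian τ f).det = 0 := by
      apply hφ
      rw [map_zero, RingHom.map_det]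
      have h2 := congrArg (algebraMap F L) hdet
      rw [map_zero, RingHom.map_det] at h2
      rw [← h2]
      congr 1
      ext a b
      simp only [RingHom.mapMatrix_apply, Matrix.map_apply, Matrix.sub_apply, map_sub,
        productJacobian, map_sum, Matrix.one_apply]
      congr 1
      · split_ifs <;> simp
      · refine Finset.sum_congr rfl fun g _ => Finset.sum_congr rfl fun i _ => ?_
        split_ifs
        · simp only [map_prod]; rfl
        · simp
    have h2 := congrArg (PowerSeries.constantCoeff (R := ℚ)) h1
    rw [RingHom.map_det, map_zero] at h2
    have h3 : (PowerSeries.constantCoeff (R := ℚ)).mapMatrix (1 - productJacobian τ f) = 1 := by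
      ext a b
      simp only [RingHom.mapMatrix_apply, Matrix.map_apply, Matrix.sub_apply, map_sub,
        productJacobian, map_sum, Matrix.one_apply]
      rw [Finset.sum_eq_zero]
      · split_ifs <;> simp
      · intro g _
        refine Finset.sum_eq_zero fun i _ => ?_
        split_ifs
        · rw [map_prod]
          have : Nontrivial (Fin (m a g)) := Fin.nontrivial_iff_two_le.mpr (hm a g)
          obtain ⟨j, hj⟩ := exists_ne i
          exact Finset.prod_eq_zero (Finset.mem_erase.mpr ⟨hj, Finset.mem_univ j⟩) (h0 _)
        · simp
    rw [h3] at h2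
    simp at h2

/-- The generating function of a type graded by a size function. -/
noncomputable def sizeGenFun {X : Type*} (size : X → ℕ) : PowerSeries ℚ :=
  PowerSeries.mk fun n => (Nat.card {x // size x = n} : ℚ)

theorem sizeGenFun_congr {X Y : Type*} {sX : X → ℕ} {sY : Y → ℕ} (F : X → Y)
    (hF : Function.Bijective F) (hs : ∀ x, sY (F x) = sX x) : sizeGenFun sX = sizeGenFun sY := by
  ext n
  simp only [sizeGenFun, PowerSeries.coeff_mk]
  congr 1
  exact Nat.card_congr ((Equiv.ofBijective F hF).subtypeEquiv fun x => by simp [hs])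

theorem sizeGenFun_sum {X Y : Type*} {sX : X → ℕ} {sY : Y → ℕ} [∀ n, Finite {x // sX x = n}]
    [∀ n, Finite {y // sY y = n}] :
    sizeGenFun (Sum.elim sX sY) = sizeGenFun sX + sizeGenFun sY := by
  ext n
  simp only [sizeGenFun, PowerSeries.coeff_mk, map_add]
  rw [Nat.card_congr (Equiv.subtypeSum (p := fun z => Sum.elim sX sY z = n))]
  simp [Nat.card_sum]

theorem sizeGenFun_sigma {ι : Type*} [Fintype ι] {X : ι → Type*} (s : ∀ i, X i → ℕ)
    [∀ i n, Finite {x // s i x = n}] :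
    sizeGenFun (fun x : Σ i, X i => s x.1 x.2) = ∑ i, sizeGenFun (s i) := by
  ext n
  simp only [sizeGenFun, PowerSeries.coeff_mk, map_sum]
  rw [← Nat.cast_sum, ← Nat.card_sigma]
  congr 1
  exact Nat.card_congr
    ⟨fun x => ⟨x.1.1, x.1.2, x.2⟩, fun x => ⟨⟨x.1, x.2.1⟩, x.2.2⟩, fun _ => rfl, fun _ => rfl⟩

theorem sizeGenFun_pi {ι : Type*} [Fintype ι] {X : ι → Type*} (s : ∀ i, X i → ℕ)
    [∀ i n, Finite {x // s i x = n}] :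
    sizeGenFun (fun x : ∀ i, X i => ∑ i, s i (x i)) = ∏ i, sizeGenFun (s i) := by
  classical
  ext n
  rw [PowerSeries.coeff_prod]
  simp only [sizeGenFun, PowerSeries.coeff_mk]
  simp only [← Nat.cast_prod, ← Nat.card_pi]
  rw [← Nat.cast_sum, ← Finset.sum_coe_sort, ← Nat.card_sigma]
  congr 1
  refine Nat.card_congr (Equiv.ofBijective (fun x =>
    (⟨⟨Finsupp.equivFunOnFinite.symm fun i => s i (x.1 i), ?_⟩, fun i => ⟨x.1 i, rfl⟩⟩ :
      Σ l : Finset.univ.finsuppAntidiag n, ∀ i, {y // s i y = l.1 i})) ⟨?_, ?_⟩)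
  · simp [Finset.mem_finsuppAntidiag, x.2]
  · rintro ⟨x, hx⟩ ⟨y, hy⟩ hxy
    have h : ∀ p q : Σ l : Finset.univ.finsuppAntidiag n, ∀ i, {y // s i y = l.1 i},
        p = q → ∀ i, (p.2 i).1 = (q.2 i).1 := by
      rintro p _ rfl i
      rfl
    exact Subtype.ext (funext (h _ _ hxy))
  · rintro ⟨⟨l, hl⟩, x⟩
    have hsum := (Finset.mem_finsuppAntidiag.mp hl).1
    refine ⟨⟨fun i => (x i).1, by simpa only [(x _).2] using hsum⟩, ?_⟩
    have hl' : Finsupp.equivFunOnFinite.symm (fun i => s i (x i).1) = l := by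
      ext i
      exact (x i).2
    refine Sigma.ext (Subtype.ext hl') ?_
    refine Function.hfunext rfl fun i j hij => ?_
    obtain rfl := eq_of_heq hij
    refine (Subtype.heq_iff_coe_eq fun y => ?_).mpr rfl
    dsimp only
    rw [hl']

theorem sizeGenFun_eq_of_size_one {X : Type*} (s : X → ℕ) (hs : ∀ x, s x = 1) :
    sizeGenFun s = (Polynomial.C (Nat.card X : ℚ) * Polynomial.X : Polynomial ℚ) := by
  ext n
  simp only [sizeGenFun, PowerSeries.coeff_mk, Polynomial.coeff_coe, Polynomial.coeff_C_mul,
    Polynomial.coeff_X]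
  split_ifs with h
  · subst h
    simp [hs]
  · have : IsEmpty {x // s x = n} := ⟨fun x => h (by rw [← x.2, hs])⟩
    simp

/-- A permutation together with its length. -/
abbrev SizedPerm := Σ n : ℕ, Perm n

/-- The points of `X`, ordered horizontally by `P` and vertically by `Q`, form a plot of `p`. -/
def Represents {X B₁ B₂ : Type*} [LinearOrder B₁] [LinearOrder B₂] (p : SizedPerm)
    (P : X → B₁) (Q : X → B₂) : Prop :=
  ∃ e : Fin p.1 ≃ X, (∀ i j, i < j ↔ P (e i) < P (e j)) ∧
    ∀ i j, p.2 i < p.2 j ↔ Q (e i) < Q (e j)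

theorem exists_equiv_fin_lt_iff {X B : Type*} [Finite X] [LinearOrder B] {P : X → B}
    (hP : Function.Injective P) :
    ∃ e : Fin (Nat.card X) ≃ X, ∀ i j, i < j ↔ P (e i) < P (e j) := by
  let : LinearOrder X := LinearOrder.lift' P hP
  have := Fintype.ofFinite X
  let e := Fintype.orderIsoFinOfCardEq X (Nat.card_eq_fintype_card (α := X)).symm
  exact ⟨e.toEquiv, fun i j => (e.lt_iff_lt (x := i) (y := j)).symm⟩

theorem exists_represents {X B₁ B₂ : Type*} [Finite X] [LinearOrder B₁] [LinearOrder B₂]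
    {P : X → B₁} {Q : X → B₂} (hP : Function.Injective P) (hQ : Function.Injective Q) :
    ∃ p, Represents p P Q := by
  obtain ⟨e, he⟩ := exists_equiv_fin_lt_iff hP
  obtain ⟨d, hd⟩ := exists_equiv_fin_lt_iff hQ
  refine ⟨⟨Nat.card X, e.trans d.symm⟩, e, he, fun i j => ?_⟩
  simp [hd]

theorem eq_of_strictMono_equiv {n : ℕ} (e : Perm n) (he : StrictMono e) (i : Fin n) :
    e i = i := by
  let o : Fin n ≃o Fin n := he.orderIsoOfSurjective _ e.surjective
  have : o = OrderIso.refl _ := Subsingleton.elim _ _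
  exact congrArg (fun f : Fin n ≃o Fin n => f i) this

theorem Perm.eq_of_lt_iff {n : ℕ} {π ρ : Perm n} (h : ∀ i j, π i < π j ↔ ρ i < ρ j) : π = ρ := by
  ext i : 1
  have := eq_of_strictMono_equiv (π.symm.trans ρ) (fun a b hab => by
    have := h (π.symm a) (π.symm b)
    simp only [Equiv.apply_symm_apply] at this
    exact this.mp hab) (π i)
  simpa using this.symm

theorem Represents.unique {X B₁ B₂ : Type*} [LinearOrder B₁] [LinearOrder B₂] {p q : SizedPerm}
    {P : X → B₁} {Q : X → B₂} (hp : Represents p P Q) (hq : Represents q P Q) : p = q := by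
  obtain ⟨n, π⟩ := p
  obtain ⟨m, ρ⟩ := q
  obtain ⟨e, he, he'⟩ := hp
  obtain ⟨d, hd, hd'⟩ := hq
  obtain rfl : n = m := by simpa using Fintype.card_congr (e.trans d.symm)
  have hed : ∀ i, e i = d i := fun i => by
    have := eq_of_strictMono_equiv (e.trans d.symm) (fun a b hab => by
      rw [hd]; simpa using (he a b).mp hab) i
    simpa [Equiv.symm_apply_eq] using this
  have : π = ρ := Perm.eq_of_lt_iff fun i j => by rw [he', hd', hed, hed]
  rw [this]

/-- `f` exhibits `π` as an inflation of `σ`, sending each index to the block containing it. -/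
structure IsBlockMap {n m : ℕ} (π : Perm n) (σ : Perm m) (f : Fin n → Fin m) : Prop where
  mono : Monotone f
  surj : Function.Surjective f
  lt_iff : ∀ a b, f a ≠ f b → (π a < π b ↔ σ (f a) < σ (f b))

/-- `π` is the inflation of `σ` whose `i`th block is `α i`. -/
def IsInflation (π σ : SizedPerm) (α : Fin σ.1 → SizedPerm) : Prop :=
  Represents π (X := Σ i, Fin (α i).1) (fun x => toLex (x.1, x.2.val))
    (fun x => toLex (σ.2 x.1, ((α x.1).2 x.2).val))

theorem exists_isInflation (σ : SizedPerm) (α : Fin σ.1 → SizedPerm) :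
    ∃ π, IsInflation π σ α := by
  refine exists_represents ?_ ?_
  · rintro ⟨i, a⟩ ⟨j, b⟩ h
    simp only [EmbeddingLike.apply_eq_iff_eq, Prod.mk.injEq] at h
    obtain ⟨rfl, h⟩ := h
    rw [Fin.ext h]
  · rintro ⟨i, a⟩ ⟨j, b⟩ h
    simp only [EmbeddingLike.apply_eq_iff_eq, Prod.mk.injEq] at h
    obtain ⟨rfl, h⟩ := h
    rw [(α i).2.injective (Fin.ext h)]

/-- The inflation of `σ` by the permutations `α i`. -/
noncomputable def inflate (σ : SizedPerm) (α : Fin σ.1 → SizedPerm) : SizedPerm :=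
  (exists_isInflation σ α).choose

theorem isInflation_inflate (σ : SizedPerm) (α : Fin σ.1 → SizedPerm) :
    IsInflation (inflate σ α) σ α :=
  (exists_isInflation σ α).choose_spec

theorem IsInflation.eq_inflate {π σ : SizedPerm} {α : Fin σ.1 → SizedPerm}
    (h : IsInflation π σ α) : π = inflate σ α :=
  h.unique (isInflation_inflate σ α)

theorem size_inflate (σ : SizedPerm) (α : Fin σ.1 → SizedPerm) :
    (inflate σ α).1 = ∑ i, (α i).1 := by
  obtain ⟨e, -⟩ := isInflation_inflate σ α
  simpa using Fintype.card_congr e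

/-- The `i`th block of a block map `f` on `π` is `p`. -/
def IsBlock {n m : ℕ} (π : Perm n) (f : Fin n → Fin m) (i : Fin m) (p : SizedPerm) : Prop :=
  Represents p (fun a : {a // f a = i} => a.1) (fun a : {a // f a = i} => π a.1)

theorem exists_isBlock {n m : ℕ} (π : Perm n) (f : Fin n → Fin m) (i : Fin m) :
    ∃ p, IsBlock π f i p :=
  exists_represents Subtype.val_injective (π.injective.comp Subtype.val_injective)

theorem IsInflation.exists_isBlockMap {π σ : SizedPerm} {α : Fin σ.1 → SizedPerm}
    (h : IsInflation π σ α) (hα : ∀ i, 0 < (α i).1) :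
    ∃ f, IsBlockMap π.2 σ.2 f ∧ ∀ i, IsBlock π.2 f i (α i) := by
  obtain ⟨e, he, he'⟩ := h
  simp only [Prod.Lex.toLex_lt_toLex] at he he'
  refine ⟨fun a => (e a).1, ⟨?_, ?_, ?_⟩, fun i => ?_⟩
  · intro a b hab
    rcases hab.eq_or_lt with rfl | hab
    · rfl
    · rcases (he a b).mp hab with h | h
      · exact h.le
      · exact h.1.le
  · intro i
    exact ⟨e.symm ⟨i, 0, hα i⟩, by simp⟩
  · intro a b hab
    rw [he']
    simp [hab]
  · have hs : ∀ x y, e.symm x < e.symm y ↔ x.1 < y.1 ∨ x.1 = y.1 ∧ x.2.val < y.2.val := by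
      intro x y
      have := he (e.symm x) (e.symm y)
      rwa [e.apply_symm_apply, e.apply_symm_apply] at this
    have hs' : ∀ x y, π.2 (e.symm x) < π.2 (e.symm y) ↔ σ.2 x.1 < σ.2 y.1 ∨
        σ.2 x.1 = σ.2 y.1 ∧ ((α x.1).2 x.2).val < ((α y.1).2 y.2).val := by
      intro x y
      have := he' (e.symm x) (e.symm y)
      rwa [e.apply_symm_apply, e.apply_symm_apply] at this
    refine ⟨Equiv.ofBijective (fun a => ⟨e.symm ⟨i, a⟩, by simp⟩) ⟨fun a b hab => ?_, ?_⟩,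
      fun a b => ?_, fun a b => ?_⟩
    · simpa using hab
    · rintro ⟨a, rfl⟩
      exact ⟨(e a).2, Subtype.ext (e.symm_apply_apply a)⟩
    · change a < b ↔ e.symm ⟨i, a⟩ < e.symm ⟨i, b⟩
      simp [hs]
    · change (α i).2 a < (α i).2 b ↔ π.2 (e.symm ⟨i, a⟩) < π.2 (e.symm ⟨i, b⟩)
      simp [hs']

theorem IsBlockMap.isInflation {π σ : SizedPerm} {f : Fin π.1 → Fin σ.1}
    (h : IsBlockMap π.2 σ.2 f) {α : Fin σ.1 → SizedPerm} (hα : ∀ i, IsBlock π.2 f i (α i)) :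
    IsInflation π σ α := by
  choose e he he' using hα
  let E : (Σ i, Fin (α i).1) ≃ Fin π.1 :=
    (Equiv.sigmaCongrRight e).trans (Equiv.sigmaFiberEquiv f)
  have hE : ∀ x, E x = (e x.1 x.2).1 := fun x => rfl
  have hf : ∀ x, f (E x) = x.1 := fun x => (e x.1 x.2).2
  clear_value E
  refine ⟨E.symm, fun i j => ?_, fun i j => ?_⟩
  all_goals
    obtain ⟨⟨i, a⟩, rfl⟩ := E.surjective i
    obtain ⟨⟨j, b⟩, rfl⟩ := E.surjective j
    rw [E.symm_apply_apply, E.symm_apply_apply]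
    simp only [Prod.Lex.toLex_lt_toLex]
    have h1 := hf ⟨i, a⟩
    have h2 := hf ⟨j, b⟩
    by_cases hij : i = j
    · subst hij
      first
      | simpa [hE] using (he i a b).symm
      | simpa [hE] using (he' i a b).symm
    · simp only at h1 h2
      first
      | simp only [hij, false_and, or_false]
        constructor
        · intro hlt
          exact lt_of_le_of_ne (h1 ▸ h2 ▸ h.mono hlt.le) hij
        · intro hlt
          by_contra hle
          have := h.mono (not_lt.mp hle)
          rw [h1, h2] at this
          exact absurd hlt (not_lt.mpr this)
      | simp only [EmbeddingLike.apply_eq_iff_eq, hij, false_and, or_false]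
        rw [h.lt_iff _ _ (by rw [h1, h2]; exact hij), h1, h2]

theorem IsBlock.pos {n m : ℕ} {π : Perm n} {f : Fin n → Fin m} {i : Fin m} {p : SizedPerm}
    (h : IsBlock π f i p) (hf : Function.Surjective f) : 0 < p.1 := by
  obtain ⟨e, -⟩ := h
  obtain ⟨a, ha⟩ := hf i
  exact Fin.pos (e.symm ⟨a, ha⟩)

theorem IsBlock.contains {n m : ℕ} {π : Perm n} {f : Fin n → Fin m} {i : Fin m} {p : SizedPerm}
    (h : IsBlock π f i p) : Contains p.2 π := by
  obtain ⟨e, he, he'⟩ := h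
  exact ⟨fun a => (e a).1, fun a b hab => (he a b).mp hab, fun a b => (he' a b).symm⟩

theorem IsBlockMap.contains {n m : ℕ} {π : Perm n} {σ : Perm m} {f : Fin n → Fin m}
    (h : IsBlockMap π σ f) : Contains σ π := by
  choose g hg using h.surj
  refine ⟨g, fun a b hab => ?_, fun a b => ?_⟩
  · by_contra hle
    have := h.mono (not_lt.mp hle)
    rw [hg, hg] at this
    exact absurd hab (not_lt.mpr this)
  · rcases eq_or_ne a b with rfl | hab
    · simp
    · rw [h.lt_iff _ _ (by rwa [hg, hg]), hg, hg]

theorem IsBlockMap.comp {n m k : ℕ} {π : Perm n} {σ : Perm m} {ρ : Perm k} {f : Fin n → Fin m}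
    {g : Fin m → Fin k} (hf : IsBlockMap π σ f) (hg : IsBlockMap σ ρ g) :
    IsBlockMap π ρ (g ∘ f) where
  mono := hg.mono.comp hf.mono
  surj := hg.surj.comp hf.surj
  lt_iff a b hab := by
    rw [hf.lt_iff a b (fun h => hab (congrArg g h)), hg.lt_iff _ _ hab]
    rfl

theorem IsBlockMap.lt_of_lt {n m : ℕ} {π : Perm n} {σ : Perm m} {f : Fin n → Fin m}
    (h : IsBlockMap π σ f) {a b : Fin n} (hab : f a < f b) : a < b := by
  by_contra hle
  exact absurd hab (not_lt.mpr (h.mono (not_lt.mp hle)))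

theorem IsPermInterval.exists_isBlockMap {m : ℕ} {σ : Perm m} {I : Finset (Fin m)}
    (hI : IsPermInterval σ I) (h1 : 1 < I.card) (h2 : I.card < m) :
    ∃ (k : ℕ) (ρ : Perm k) (g : Fin m → Fin k), 2 ≤ k ∧ k < m ∧ IsBlockMap σ ρ g := by
  obtain ⟨i₀, hi₀, i₁, hi₁, hne⟩ := Finset.one_lt_card.mp h1
  obtain ⟨j₀, hj₀⟩ : ∃ j, j ∉ I := by
    by_contra! h
    rw [Finset.eq_univ_of_forall h] at h2
    simp at h2
  let X := {j // j ∉ I ∨ j = i₀}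
  obtain ⟨p, e, he, he'⟩ := exists_represents (X := X) (P := Subtype.val)
    (Q := fun x => σ x.1) Subtype.val_injective (σ.injective.comp Subtype.val_injective)
  have hp : p.1 = Fintype.card X := by simpa using Fintype.card_congr e
  let c : Fin m → X := fun j => if h : j ∈ I then ⟨i₀, .inr rfl⟩ else ⟨j, .inl h⟩
  have hc : ∀ j ∈ I, (c j).1 = i₀ := fun j hj => by simp [c, hj]
  have hc' : ∀ j ∉ I, (c j).1 = j := fun j hj => by simp [c, hj]
  have hcX : ∀ x : X, c x.1 = x := by
    rintro ⟨x, hx⟩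
    apply Subtype.ext
    by_cases hxI : x ∈ I
    · exact (hc _ hxI).trans (hx.resolve_left (not_not.mpr hxI)).symm
    · exact hc' _ hxI
  have hpos : ∀ a ∈ I, ∀ b ∉ I, (a < b ↔ i₀ < b) := by
    intro a ha b hb
    constructor
    · intro hab
      by_contra hle
      exact hb (hI.1 ha hi₀ hab.le (not_lt.mp hle))
    · intro hab
      by_contra hle
      exact hb (hI.1 hi₀ ha hab.le (not_lt.mp hle))
  have hval : ∀ a ∈ I, ∀ b ∉ I, (σ a < σ b ↔ σ i₀ < σ b) := by
    have key : ∀ a ∈ I, ∀ a' ∈ I, ∀ b ∉ I, σ a < σ b → σ a' < σ b := by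
      intro a ha a' ha' b hb hab
      by_contra hle
      have := hI.2 (Finset.mem_image_of_mem σ ha) (Finset.mem_image_of_mem σ ha') hab.le
        (not_lt.mp hle)
      obtain ⟨b', hb', h⟩ := Finset.mem_image.mp this
      exact hb (σ.injective h ▸ hb')
    exact fun a ha b hb => ⟨key a ha i₀ hi₀ b hb, key i₀ hi₀ a ha b hb⟩
  have hposc : ∀ a b, c a ≠ c b → (a < b ↔ (c a).1 < (c b).1) := by
    intro a b hab
    by_cases ha : a ∈ I <;> by_cases hb : b ∈ I
    · exact absurd (Subtype.ext ((hc a ha).trans (hc b hb).symm)) hab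
    · rw [hc a ha, hc' b hb, hpos a ha b hb]
    · have h := hpos b hb a ha
      have h3 : a ≠ b := fun h => ha (h ▸ hb)
      have h4 : a ≠ i₀ := fun h => ha (h ▸ hi₀)
      rw [hc b hb, hc' a ha]
      omega
    · rw [hc' a ha, hc' b hb]
  have hvalc : ∀ a b, c a ≠ c b → (σ a < σ b ↔ σ (c a).1 < σ (c b).1) := by
    intro a b hab
    by_cases ha : a ∈ I <;> by_cases hb : b ∈ I
    · exact absurd (Subtype.ext ((hc a ha).trans (hc b hb).symm)) hab
    · rw [hc a ha, hc' b hb, hval a ha b hb]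
    · have h := hval b hb a ha
      have h3 : σ a ≠ σ b := fun h => ha (σ.injective h ▸ hb)
      have h4 : σ a ≠ σ i₀ := fun h => ha (σ.injective h ▸ hi₀)
      rw [hc b hb, hc' a ha]
      omega
    · rw [hc' a ha, hc' b hb]
  have hce : ∀ j, e (e.symm (c j)) = c j := fun j => e.apply_symm_apply _
  refine ⟨p.1, p.2, fun j => e.symm (c j), ?_, ?_, ?_, ?_, ?_⟩
  · rw [hp]
    refine Fintype.one_lt_card_iff.mpr ⟨⟨i₀, .inr rfl⟩, ⟨j₀, .inl hj₀⟩, fun h => hj₀ ?_⟩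
    have h' : i₀ = j₀ := congrArg Subtype.val h
    exact h' ▸ hi₀
  · rw [hp]
    calc Fintype.card X < Fintype.card (Fin m) :=
          Fintype.card_subtype_lt (x := i₁) (by simp [hi₁, hne.symm])
      _ = m := Fintype.card_fin m
  · intro a b hab
    rcases eq_or_ne (c a) (c b) with h | h
    · simp [h]
    · refine le_of_lt ((he _ _).mpr ?_)
      rw [hce, hce, ← hposc a b h]
      exact lt_of_le_of_ne hab fun h' => h (congrArg c h')
  · intro x
    exact ⟨(e x).1, (congrArg e.symm (hcX (e x))).trans (e.symm_apply_apply x)⟩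
  · intro a b hab
    rw [he', hce, hce, hvalc a b fun h => hab (congrArg e.symm h)]

theorem exists_simple_isBlockMap {n : ℕ} (π : Perm n) (hn : 2 ≤ n) :
    ∃ (m : ℕ) (σ : Perm m) (f : Fin n → Fin m), 2 ≤ m ∧ IsSimple σ ∧ IsBlockMap π σ f := by
  classical
  have hex : ∃ m, 2 ≤ m ∧ ∃ (σ : Perm m) (f : Fin n → Fin m), IsBlockMap π σ f :=
    ⟨n, hn, π, id, monotone_id, Function.surjective_id, fun _ _ _ => Iff.rfl⟩
  obtain ⟨hm, σ, f, hf⟩ := Nat.find_spec hex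
  refine ⟨Nat.find hex, σ, f, hm, fun I hI => ?_, hf⟩
  by_contra! h
  have hle : I.card ≤ Nat.find hex := by simpa using I.card_le_univ
  obtain ⟨k, ρ, g, hk, hlt, hg⟩ := hI.exists_isBlockMap h.1 (lt_of_le_of_ne hle h.2)
  exact Nat.find_min hex hlt ⟨hk, ρ, _, hf.comp hg⟩

theorem IsBlockMap.isPermInterval_image {n m : ℕ} {π : Perm n} {σ : Perm m} {f : Fin n → Fin m}
    (hf : IsBlockMap π σ f) {J : Finset (Fin n)} (hJ : IsPermInterval π J) :
    IsPermInterval σ (J.image f) := by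
  constructor
  · intro i j l hi hl hij hjl
    obtain ⟨a, ha, rfl⟩ := Finset.mem_image.mp hi
    obtain ⟨c, hc, rfl⟩ := Finset.mem_image.mp hl
    obtain ⟨b, rfl⟩ := hf.surj j
    rcases hij.eq_or_lt with h | h
    · exact h ▸ hi
    rcases hjl.eq_or_lt with h' | h'
    · exact h' ▸ hl
    exact Finset.mem_image_of_mem f (hJ.1 ha hc (hf.lt_of_lt h).le (hf.lt_of_lt h').le)
  · intro i j l hi hl hij hjl
    obtain ⟨x, hx, rfl⟩ := Finset.mem_image.mp hi
    obtain ⟨z, hz, rfl⟩ := Finset.mem_image.mp hl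
    obtain ⟨a, ha, rfl⟩ := Finset.mem_image.mp hx
    obtain ⟨c, hc, rfl⟩ := Finset.mem_image.mp hz
    obtain ⟨y, rfl⟩ := σ.surjective j
    obtain ⟨b, rfl⟩ := hf.surj y
    rcases hij.eq_or_lt with h | h
    · exact h ▸ hi
    rcases hjl.eq_or_lt with h' | h'
    · exact h' ▸ hl
    have h1 : π a < π b := (hf.lt_iff a b fun e => h.ne (by rw [e])).mpr h
    have h2 : π b < π c := (hf.lt_iff b c fun e => h'.ne (by rw [e])).mpr h'
    obtain ⟨b', hb', e⟩ := Finset.mem_image.mp (hJ.2 (Finset.mem_image_of_mem π ha)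
      (Finset.mem_image_of_mem π hc) h1.le h2.le)
    exact Finset.mem_image_of_mem σ (Finset.mem_image_of_mem f (π.injective e ▸ hb'))

theorem IsBlockMap.isPermInterval_fiber {n m : ℕ} {π : Perm n} {σ : Perm m} {f : Fin n → Fin m}
    (hf : IsBlockMap π σ f) (i : Fin m) :
    IsPermInterval π (Finset.univ.filter fun a => f a = i) := by
  constructor
  · intro a b c ha hc hab hbc
    simp only [Finset.mem_filter, Finset.mem_univ, true_and] at ha hc ⊢
    exact le_antisymm (hc ▸ hf.mono hbc) (ha ▸ hf.mono hab)
  · intro x y z hx hz hxy hyz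
    simp only [Finset.mem_image, Finset.mem_filter, Finset.mem_univ, true_and] at hx hz ⊢
    obtain ⟨a, ha, rfl⟩ := hx
    obtain ⟨c, hc, rfl⟩ := hz
    obtain ⟨b, rfl⟩ := π.surjective y
    refine ⟨b, ?_, rfl⟩
    by_contra hb
    have h1 := hf.lt_iff a b (by rw [ha]; exact Ne.symm hb)
    have h2 := hf.lt_iff b c (by rw [hc]; exact hb)
    rw [ha] at h1
    rw [hc] at h2
    have h3 : π a ≠ π b := fun e => hb (by rw [← π.injective e, ha])
    have h4 : π b ≠ π c := fun e => hb (by rw [π.injective e, hc])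
    exact absurd (h1.mp (lt_of_le_of_ne hxy h3)) (not_lt.mpr (h2.mp (lt_of_le_of_ne hyz h4)).le)

/-- If a block of one simple inflation meets two blocks of another one, it meets all of them and
the second one has exactly two blocks. -/
theorem IsBlockMap.eq_two_of_not_refines {n m k : ℕ} {π : Perm n} {σ : Perm m} {τ : Perm k}
    {f : Fin n → Fin m} {g : Fin n → Fin k} (hf : IsBlockMap π σ f) (hg : IsBlockMap π τ g)
    (hσ : IsSimple σ) (hm : 2 ≤ m) (hk : 2 ≤ k) {a b : Fin n} (hgab : g a = g b)
    (hfab : f a ≠ f b) : m = 2 := by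
  have hJ := hg.isPermInterval_fiber (g a)
  set J := Finset.univ.filter fun x => g x = g a with hJdef
  have hmem : ∀ x, x ∈ J ↔ g x = g a := fun x => by simp [hJdef]
  have hall : ∀ j, ∃ x ∈ J, f x = j := by
    have hcard := hσ _ (hf.isPermInterval_image hJ)
    have hlt : 1 < (J.image f).card := Finset.one_lt_card.mpr
      ⟨f a, Finset.mem_image_of_mem f ((hmem a).mpr rfl), f b,
        Finset.mem_image_of_mem f ((hmem b).mpr hgab.symm), hfab⟩
    have huniv : J.image f = Finset.univ := by
      apply Finset.eq_univ_of_card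
      rw [hcard.resolve_left (by omega), Fintype.card_fin]
    intro j
    have : j ∈ J.image f := huniv ▸ Finset.mem_univ j
    simpa using this
  obtain ⟨c, hc⟩ : ∃ c, c ∉ J := by
    have : Nontrivial (Fin k) := Fin.nontrivial_iff_two_le.mpr hk
    obtain ⟨i, hi⟩ := exists_ne (g a)
    obtain ⟨c, rfl⟩ := hg.surj i
    exact ⟨c, fun h => hi ((hmem c).mp h)⟩
  have hpos : (∀ j, f c ≤ j) ∨ ∀ j, j ≤ f c := by
    have : (∀ x ∈ J, c ≤ x) ∨ ∀ x ∈ J, x ≤ c := by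
      by_contra! h
      obtain ⟨⟨x, hx, hxc⟩, y, hy, hyc⟩ := h
      exact hc (hJ.1 hx hy hxc.le hyc.le)
    refine this.imp (fun h j => ?_) fun h j => ?_
    all_goals
      obtain ⟨x, hx, rfl⟩ := hall j
      exact hf.mono (h x hx)
  have hval : (∀ j, σ (f c) ≤ σ j) ∨ ∀ j, σ j ≤ σ (f c) := by
    have : (∀ x ∈ J, π c ≤ π x) ∨ ∀ x ∈ J, π x ≤ π c := by
      by_contra! h
      obtain ⟨⟨x, hx, hxc⟩, y, hy, hyc⟩ := h
      obtain ⟨c', hc', e⟩ := Finset.mem_image.mp (hJ.2 (Finset.mem_image_of_mem π hx)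
        (Finset.mem_image_of_mem π hy) hxc.le hyc.le)
      exact hc (π.injective e ▸ hc')
    refine this.imp (fun h j => ?_) fun h j => ?_
    all_goals
      obtain ⟨x, hx, rfl⟩ := hall j
      rcases eq_or_ne (f c) (f x) with e | e
      · rw [e]
      have hne : π c ≠ π x := fun e' => e (by rw [π.injective e'])
    · exact ((hf.lt_iff _ _ e).mp (lt_of_le_of_ne (h x hx) hne)).le
    · exact ((hf.lt_iff _ _ e.symm).mp (lt_of_le_of_ne (h x hx) hne.symm)).le
  have hI : IsPermInterval σ (Finset.univ.erase (f c)) := by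
    constructor
    · intro i j l hi hl hij hjl
      simp only [Finset.mem_erase, Finset.mem_univ, and_true] at hi hl ⊢
      rintro rfl
      rcases hpos with h | h
      · exact hi (le_antisymm hij (h i))
      · exact hl (le_antisymm (h l) hjl)
    · intro i j l hi hl hij hjl
      obtain ⟨x, rfl⟩ := σ.surjective i
      obtain ⟨y, rfl⟩ := σ.surjective j
      obtain ⟨z, rfl⟩ := σ.surjective l
      simp only [Finset.mem_image, Finset.mem_erase, Finset.mem_univ, and_true,
        EmbeddingLike.apply_eq_iff_eq, exists_eq_right] at hi hl ⊢
      rintro rfl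
      rcases hval with h | h
      · exact hi (σ.injective (le_antisymm hij (h x)))
      · exact hl (σ.injective (le_antisymm (h z) hjl))
  have := hσ _ hI
  rw [Finset.card_erase_of_mem (Finset.mem_univ _), Finset.card_univ, Fintype.card_fin] at this
  omega

theorem IsBlockMap.eq_of_refines {n m k : ℕ} {π : Perm n} {σ : Perm m} {τ : Perm k}
    {f : Fin n → Fin m} {g : Fin n → Fin k} (hf : IsBlockMap π σ f) (hg : IsBlockMap π τ g)
    (hτ : IsSimple τ) (hm : 2 ≤ m) (h : ∀ a b, g a = g b → f a = f b) {a b : Fin n}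
    (hab : f a = f b) : g a = g b := by
  rcases hτ _ (hg.isPermInterval_image (hf.isPermInterval_fiber (f a))) with hc | hc
  · rw [Finset.card_le_one] at hc
    exact hc _ (Finset.mem_image_of_mem g (by simp)) _ (Finset.mem_image_of_mem g (by simp [hab]))
  · exfalso
    have huniv := Finset.eq_univ_of_card _ (hc.trans (Fintype.card_fin k).symm)
    have : Nontrivial (Fin m) := Fin.nontrivial_iff_two_le.mpr hm
    obtain ⟨i, hi⟩ := exists_ne (f a)
    obtain ⟨c, rfl⟩ := hf.surj i
    obtain ⟨d, hd, hdc⟩ := Finset.mem_image.mp (huniv ▸ Finset.mem_univ (g c))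
    simp only [Finset.mem_filter, Finset.mem_univ, true_and] at hd
    exact hi (by rw [← h _ _ hdc, hd])

theorem IsBlockMap.eq_of_fibers {n m k : ℕ} {π : Perm n} {σ : Perm m} {τ : Perm k}
    {f : Fin n → Fin m} {g : Fin n → Fin k} (hf : IsBlockMap π σ f) (hg : IsBlockMap π τ g)
    (h : ∀ a b, f a = f b ↔ g a = g b) :
    (⟨m, σ⟩ : SizedPerm) = ⟨k, τ⟩ ∧ ∀ a, (f a).val = (g a).val := by
  choose s hs using hf.surj
  have hsm : StrictMono fun i => g (s i) := by
    intro i j hij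
    have h1 : s i < s j := hf.lt_of_lt (by rwa [hs, hs])
    refine lt_of_le_of_ne (hg.mono h1.le) fun e => ?_
    have := (h _ _).mpr e
    rw [hs, hs] at this
    exact hij.ne this
  have hsurj : Function.Surjective fun i => g (s i) := by
    intro j
    obtain ⟨a, rfl⟩ := hg.surj j
    exact ⟨f a, (h _ _).mp (hs _)⟩
  obtain rfl : m = k := by
    simpa using Fintype.card_congr (Equiv.ofBijective _ ⟨hsm.injective, hsurj⟩)
  have hid : ∀ i, g (s i) = i :=
    eq_of_strictMono_equiv (Equiv.ofBijective _ ⟨hsm.injective, hsurj⟩) hsm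
  have hfg : f = g := by
    ext a
    rw [← hid (f a), (h _ _).mp (hs (f a))]
  subst hfg
  refine ⟨?_, fun _ => rfl⟩
  have : σ = τ := Perm.eq_of_lt_iff fun i j => by
    rcases eq_or_ne i j with rfl | hij
    · simp
    · have h1 := hf.lt_iff (s i) (s j) (by rwa [hs, hs])
      have h2 := hg.lt_iff (s i) (s j) (by rwa [hs, hs])
      rw [hs, hs] at h1 h2
      rw [← h1, h2]
  rw [this]

theorem IsBlockMap.unique {n m k : ℕ} {π : Perm n} {σ : Perm m} {τ : Perm k}
    {f : Fin n → Fin m} {g : Fin n → Fin k} (hf : IsBlockMap π σ f) (hg : IsBlockMap π τ g)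
    (hσ : IsSimple σ) (hτ : IsSimple τ) (hm : 2 ≤ m) (hk : 2 ≤ k) :
    (⟨m, σ⟩ : SizedPerm) = ⟨k, τ⟩ ∧ (m ≠ 2 → ∀ a, (f a).val = (g a).val) := by
  by_cases h1 : ∀ a b, g a = g b → f a = f b
  · have := hf.eq_of_fibers hg fun a b => ⟨hf.eq_of_refines hg hτ hm h1, h1 a b⟩
    exact ⟨this.1, fun _ => this.2⟩
  by_cases h2 : ∀ a b, f a = f b → g a = g b
  · have := hf.eq_of_fibers hg fun a b => ⟨h2 a b, hg.eq_of_refines hf hσ hk h2⟩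
    exact ⟨this.1, fun _ => this.2⟩
  push Not at h1 h2
  obtain ⟨a, b, hab, hab'⟩ := h1
  obtain ⟨c, d, hcd, hcd'⟩ := h2
  obtain rfl := hf.eq_two_of_not_refines hg hσ hm hk hab hab'
  obtain rfl := hg.eq_two_of_not_refines hf hτ hk hm hcd hcd'
  refine ⟨?_, fun h => absurd rfl h⟩
  have hn : 0 < n := Fin.pos a
  have hbot : ∀ {h : Fin n → Fin 2}, Monotone h → Function.Surjective h →
      h ⟨0, hn⟩ = 0 ∧ h ⟨n - 1, by omega⟩ = 1 := by
    intro h hmono hsurj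
    obtain ⟨x, hx⟩ := hsurj 0
    obtain ⟨y, hy⟩ := hsurj 1
    have h3 := hmono (show (⟨0, hn⟩ : Fin n) ≤ x from Nat.zero_le _)
    have h4 := hmono (show y ≤ (⟨n - 1, by omega⟩ : Fin n) from Nat.le_sub_one_of_lt y.2)
    omega
  obtain ⟨f0, f1⟩ := hbot hf.mono hf.surj
  obtain ⟨g0, g1⟩ := hbot hg.mono hg.surj
  have e1 := hf.lt_iff ⟨0, hn⟩ ⟨n - 1, by omega⟩ (by rw [f0, f1]; simp)
  have e2 := hg.lt_iff ⟨0, hn⟩ ⟨n - 1, by omega⟩ (by rw [g0, g1]; simp)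
  rw [f0, f1] at e1
  rw [g0, g1] at e2
  have h01 : σ 0 < σ 1 ↔ τ 0 < τ 1 := e1.symm.trans e2
  have hs : σ 0 ≠ σ 1 := σ.injective.ne (by simp)
  have ht : τ 0 ≠ τ 1 := τ.injective.ne (by simp)
  have : σ = τ := Perm.eq_of_lt_iff fun i j => by
    fin_cases i <;> fin_cases j <;> simp <;> omega
  rw [this]

/-- `p` is an inflation of `σ` by nonempty permutations. -/
def IsInflationOf (p σ : SizedPerm) : Prop :=
  ∃ g : Fin p.1 → Fin σ.1, IsBlockMap p.2 σ.2 g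

/-- The blocks `α` are nonempty and, if `σ` has length two, the first block is not
itself an inflation of `σ`. -/
structure IsCanonical (σ : SizedPerm) (α : Fin σ.1 → SizedPerm) : Prop where
  pos : ∀ i, 0 < (α i).1
  not_isInflationOf : σ.1 = 2 → ∀ i : Fin σ.1, i.val = 0 → ¬ IsInflationOf (α i) σ

theorem IsBlockMap.exists_smaller {n m : ℕ} {π : Perm n} {σ : Perm m} {f : Fin n → Fin m}
    (hf : IsBlockMap π σ f) (hm : m = 2) {i : Fin m} (hi : i.val = 0) {p : SizedPerm}
    (hp : IsBlock π f i p) (hd : IsInflationOf p ⟨m, σ⟩) :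
    ∃ f', IsBlockMap π σ f' ∧ (∀ a, f' a = i → f a = i) ∧ ∃ a, f a = i ∧ f' a ≠ i := by
  classical
  obtain ⟨e, he, he'⟩ := hp
  obtain ⟨g, hg⟩ := hd
  simp only at g hg
  let f' : Fin n → Fin m := fun a => if h : f a = i then g (e.symm ⟨a, h⟩) else f a
  have h1 : ∀ a (h : f a = i), f' a = g (e.symm ⟨a, h⟩) := fun a h => dif_pos h
  have h2 : ∀ a, f a ≠ i → f' a = f a := fun a h => dif_neg h
  have hle : ∀ x y, f x = i → f y ≠ i → f' x ≤ f' y := fun x y hx hy => by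
    rw [h2 y hy]; omega
  have h3 : ∀ a, f' a = i → f a = i := fun a ha => by
    by_contra h
    exact h (h2 a h ▸ ha)
  have hlt : ∀ x y (hx : f x = i) (hy : f y = i), x < y ↔ e.symm ⟨x, hx⟩ < e.symm ⟨y, hy⟩ := by
    intro x y hx hy
    rw [he, e.apply_symm_apply, e.apply_symm_apply]
  refine ⟨f', ⟨?_, ?_, ?_⟩, h3, ?_⟩
  · intro a b hab
    by_cases ha : f a = i
    · by_cases hb : f b = i
      · rw [h1 a ha, h1 b hb]
        apply hg.mono
        rcases hab.eq_or_lt with rfl | hab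
        · rfl
        · exact ((hlt a b ha hb).mp hab).le
      · exact hle a b ha hb
    · have := hf.mono hab
      rw [h2 a ha, h2 b (by omega)]
      exact this
  · intro j
    by_cases hj : j = i
    · obtain ⟨x, hx⟩ := hg.surj j
      refine ⟨(e x).1, ?_⟩
      rw [h1 _ (e x).2, Subtype.coe_eta, e.symm_apply_apply, hx]
    · obtain ⟨x, rfl⟩ := hf.surj j
      exact ⟨x, h2 x hj⟩
  · intro a b hab
    by_cases ha : f a = i <;> by_cases hb : f b = i
    · rw [h1 a ha, h1 b hb] at hab ⊢
      rw [← hg.lt_iff _ _ hab, he', e.apply_symm_apply, e.apply_symm_apply]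
    · have : f' a = f a := by
        rw [h2 b hb] at hab
        omega
      rw [this, h2 b hb]
      exact hf.lt_iff a b (by omega)
    · have : f' b = f b := by
        rw [h2 a ha] at hab
        omega
      rw [this, h2 a ha]
      exact hf.lt_iff a b (by omega)
    · rw [h2 a ha, h2 b hb] at hab ⊢
      exact hf.lt_iff a b hab
  · obtain ⟨x, hx⟩ := hg.surj ⟨1, by omega⟩
    refine ⟨(e x).1, (e x).2, ?_⟩
    rw [h1 _ (e x).2, Subtype.coe_eta, e.symm_apply_apply, hx]
    intro h
    rw [← h] at hi
    simp at hi

theorem exists_isCanonical {π : SizedPerm} (hπ : 2 ≤ π.1) :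
    ∃ σ : SizedPerm, 2 ≤ σ.1 ∧ IsSimple σ.2 ∧ ∃ α, IsCanonical σ α ∧ inflate σ α = π := by
  classical
  obtain ⟨m, σ, f₀, hm, hσ, hf₀⟩ := exists_simple_isBlockMap π.2 hπ
  refine ⟨⟨m, σ⟩, hm, hσ, ?_⟩
  let z : Fin m := ⟨0, by omega⟩
  let w : (Fin π.1 → Fin m) → ℕ := fun f => (Finset.univ.filter fun a => f a = z).card
  have hex : ∃ k f, IsBlockMap π.2 σ f ∧ w f = k := ⟨_, f₀, hf₀, rfl⟩
  obtain ⟨f, hf, hw⟩ := Nat.find_spec hex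
  choose α hα using fun i => exists_isBlock π.2 f i
  refine ⟨α, ⟨fun i => (hα i).pos hf.surj, fun h2 i hi hd => ?_⟩,
    (IsBlockMap.isInflation (σ := ⟨m, σ⟩) hf hα).eq_inflate.symm⟩
  obtain rfl : i = z := Fin.ext hi
  obtain ⟨f', hf', hsub, a, ha, ha'⟩ := hf.exists_smaller h2 hi (hα _) hd
  refine Nat.find_min hex (m := w f') ?_ ⟨f', hf', rfl⟩
  rw [← hw]
  refine Finset.card_lt_card (Finset.ssubset_iff_of_subset ?_ |>.mpr ⟨a, by simpa using ha, ?_⟩)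
  · intro b hb
    simp only [Finset.mem_filter, Finset.mem_univ, true_and] at hb ⊢
    exact hsub b hb
  · simpa using ha'

theorem IsBlockMap.isInflationOf_of_ne {n m : ℕ} {π : Perm n} {σ : Perm m} {f f' : Fin n → Fin m}
    (hf : IsBlockMap π σ f) (hf' : IsBlockMap π σ f') (hm : m = 2) {i : Fin m} (hi : i.val = 0)
    {p : SizedPerm} (hp : IsBlock π f i p) {a : Fin n} (ha : f a = i) (ha' : f' a ≠ i) :
    IsInflationOf p ⟨m, σ⟩ := by
  obtain ⟨e, he, he'⟩ := hp
  refine ⟨fun x => f' (e x).1, ?_, ?_, ?_⟩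
  · intro x y hxy
    apply hf'.mono
    rcases hxy.eq_or_lt with rfl | hxy
    · rfl
    · exact ((he x y).mp hxy).le
  · intro j
    by_cases hj : j = i
    · obtain ⟨b, rfl⟩ := hf'.surj j
      have hba : b < a := hf'.lt_of_lt (by omega)
      have hb : f b = i := by
        have := hf.mono hba.le
        omega
      exact ⟨e.symm ⟨b, hb⟩, by simp⟩
    · refine ⟨e.symm ⟨a, ha⟩, ?_⟩
      simp only [Equiv.apply_symm_apply]
      simp only at j hj
      omega
  · intro x y hxy
    rw [he']
    exact hf'.lt_iff _ _ hxy

theorem IsCanonical.exists_isBlockMap {σ : SizedPerm} {α : Fin σ.1 → SizedPerm}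
    (h : IsCanonical σ α) :
    ∃ f, IsBlockMap (inflate σ α).2 σ.2 f ∧ ∀ i, IsBlock (inflate σ α).2 f i (α i) :=
  (isInflation_inflate σ α).exists_isBlockMap h.pos

theorem IsCanonical.unique {σ σ' : SizedPerm} {α : Fin σ.1 → SizedPerm}
    {α' : Fin σ'.1 → SizedPerm} (hσ : IsSimple σ.2) (hσ' : IsSimple σ'.2) (h2 : 2 ≤ σ.1)
    (h2' : 2 ≤ σ'.1) (h : IsCanonical σ α) (h' : IsCanonical σ' α')
    (heq : inflate σ α = inflate σ' α') :
    (⟨σ, α⟩ : Σ σ : SizedPerm, Fin σ.1 → SizedPerm) = ⟨σ', α'⟩ := by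
  obtain ⟨f, hf, hα⟩ := h.exists_isBlockMap
  have hex := h'.exists_isBlockMap
  rw [← heq] at hex
  obtain ⟨f', hf', hα'⟩ := hex
  obtain ⟨hs, hne⟩ := hf.unique hf' hσ hσ' h2 h2'
  obtain rfl : σ = σ' := hs
  have hff' : f = f' := by
    by_contra hff'
    obtain ⟨a, ha⟩ := Function.ne_iff.mp hff'
    by_cases hm : σ.1 = 2
    · let z : Fin σ.1 := ⟨0, by omega⟩
      by_cases hz : f a = z
      · exact h.not_isInflationOf hm z rfl
          (hf.isInflationOf_of_ne hf' hm rfl (hα z) hz fun h => ha (hz.trans h.symm))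
      · have : f' a = z := by
          have : z.val = 0 := rfl
          omega
        exact h'.not_isInflationOf hm z rfl
          (hf'.isInflationOf_of_ne hf hm rfl (hα' z) this hz)
    · exact ha (Fin.ext (hne hm a))
  subst hff'
  obtain rfl : α = α' := funext fun i => (hα i).unique (hα' i)
  rfl

theorem isInflationOf_inflate_iff {σ ρ : SizedPerm} {α : Fin σ.1 → SizedPerm}
    (hσ : IsSimple σ.2) (hρ : IsSimple ρ.2) (h2 : 2 ≤ σ.1) (h2' : 2 ≤ ρ.1)
    (hα : ∀ i, 0 < (α i).1) : IsInflationOf (inflate σ α) ρ ↔ ρ = σ := by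
  obtain ⟨f, hf, -⟩ := (isInflation_inflate σ α).exists_isBlockMap hα
  constructor
  · rintro ⟨g, hg⟩
    exact (hg.unique hf hρ hσ h2' h2).1
  · rintro rfl
    exact ⟨f, hf⟩

section Blocks

variable {n m k : ℕ} {f : Fin n → Fin m} {i j : Fin m} {e : Fin k ≃ {a // f a = i}}

theorem covBy_iff_of_same_block (hf : Monotone f) (he : ∀ x y, x < y ↔ (e x).1 < (e y).1)
    (x y : Fin k) : (e x).1 ⋖ (e y).1 ↔ x ⋖ y := by
  constructor
  · rintro ⟨h, h'⟩
    exact ⟨(he x y).mpr h, fun z hxz hzy => h' ((he x z).mp hxz) ((he z y).mp hzy)⟩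
  · rintro ⟨h, h'⟩
    refine ⟨(he x y).mp h, fun c hxc hcy => ?_⟩
    have hc : f c = i :=
      le_antisymm ((hf hcy.le).trans (e y).2.le) ((e x).2.ge.trans (hf hxc.le))
    obtain ⟨z, hz⟩ := e.surjective ⟨c, hc⟩
    obtain rfl : (e z).1 = c := congrArg Subtype.val hz
    exact h' ((he x z).mpr hxc) ((he z y).mpr hcy)

theorem isMin_iff_of_block (hf : Monotone f) (hs : Function.Surjective f)
    (he : ∀ x y, x < y ↔ (e x).1 < (e y).1) (x : Fin k) :
    IsMin (e x).1 ↔ IsMin i ∧ IsMin x := by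
  simp only [isMin_iff_forall_not_lt]
  constructor
  · refine fun h => ⟨fun l hl => ?_, fun y hy => h _ ((he _ _).mp hy)⟩
    obtain ⟨c, rfl⟩ := hs l
    exact h c (hf.reflect_lt (hl.trans_le (e x).2.ge))
  · rintro ⟨h, h'⟩ c hc
    rcases (hf hc.le).lt_or_eq with hlt | heq
    · exact h _ (hlt.trans_le (e x).2.le)
    · obtain ⟨z, hz⟩ := e.surjective ⟨c, heq.trans (e x).2⟩
      obtain rfl : (e z).1 = c := congrArg Subtype.val hz
      exact h' z ((he _ _).mpr hc)

theorem isMax_iff_of_block (hf : Monotone f) (hs : Function.Surjective f)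
    (he : ∀ x y, x < y ↔ (e x).1 < (e y).1) (x : Fin k) :
    IsMax (e x).1 ↔ IsMax i ∧ IsMax x := by
  simp only [isMax_iff_forall_not_lt]
  constructor
  · refine fun h => ⟨fun l hl => ?_, fun y hy => h _ ((he _ _).mp hy)⟩
    obtain ⟨c, rfl⟩ := hs l
    exact h c (hf.reflect_lt ((e x).2.le.trans_lt hl))
  · rintro ⟨h, h'⟩ c hc
    rcases (hf hc.le).lt_or_eq with hlt | heq
    · exact h _ ((e x).2.ge.trans_lt hlt)
    · obtain ⟨z, hz⟩ := e.surjective ⟨c, heq.symm.trans (e x).2⟩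
      obtain rfl : (e z).1 = c := congrArg Subtype.val hz
      exact h' z ((he _ _).mpr hc)

theorem covBy_iff_of_ne_block {k' : ℕ} {e' : Fin k' ≃ {a // f a = j}} (hf : Monotone f)
    (hs : Function.Surjective f) (he : ∀ x y, x < y ↔ (e x).1 < (e y).1)
    (he' : ∀ x y, x < y ↔ (e' x).1 < (e' y).1) (hij : i ≠ j) (x : Fin k) (y : Fin k') :
    (e x).1 ⋖ (e' y).1 ↔ i ⋖ j ∧ IsMax x ∧ IsMin y := by
  have hx := (e x).2
  have hy := (e' y).2
  simp only [isMin_iff_forall_not_lt, isMax_iff_forall_not_lt]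
  constructor
  · rintro ⟨h, h'⟩
    have hlt : i < j := lt_of_le_of_ne (hx ▸ hy ▸ hf h.le) hij
    refine ⟨⟨hlt, fun l hil hlj => ?_⟩, fun z hz => ?_, fun z hz => ?_⟩
    · obtain ⟨c, rfl⟩ := hs l
      exact h' (hf.reflect_lt (hx.trans_lt hil)) (hf.reflect_lt (hlj.trans_le hy.ge))
    · refine h' ((he _ _).mp hz) (hf.reflect_lt ?_)
      rwa [(e z).2, hy]
    · refine h' (hf.reflect_lt ?_) ((he' _ _).mp hz)
      rwa [(e' z).2, hx]
  · rintro ⟨⟨hlt, hcov⟩, hmax, hmin⟩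
    refine ⟨hf.reflect_lt (by rwa [hx, hy]), fun c hc hc' => ?_⟩
    rcases (hf hc.le).lt_or_eq with h1 | h1
    · rcases (hf hc'.le).lt_or_eq with h2 | h2
      · exact hcov (hx.symm.trans_lt h1) (h2.trans_eq hy)
      · obtain ⟨z, hz⟩ := e'.surjective ⟨c, h2.trans hy⟩
        obtain rfl : (e' z).1 = c := congrArg Subtype.val hz
        exact hmin z ((he' _ _).mpr hc')
    · obtain ⟨z, hz⟩ := e.surjective ⟨c, h1.symm.trans hx⟩
      obtain rfl : (e z).1 = c := congrArg Subtype.val hz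
      exact hmax z ((he _ _).mpr hc)

end Blocks

/-- The possible configurations of a `k`-tuple of entries of a permutation. -/
abbrev TupleProfile (k : ℕ) : Type :=
  (Fin k → Fin k → Prop) × (Fin k → Fin k → Prop) × (Fin k → Fin k → Prop) ×
    (Fin k → Prop) × (Fin k → Prop)

/-- The configuration of a tuple `h` of entries of `π`: the order of the positions and of the
values, which positions are adjacent, and which are the first and the last one. -/
def tupleProfile {k n : ℕ} (π : Perm n) (h : Fin k → Fin n) : TupleProfile k :=
  (fun s t => h s < h t, fun s t => π (h s) < π (h t), fun s t => h s ⋖ h t,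
    fun s => IsMin (h s), fun s => IsMax (h s))

theorem tupleProfile_eq_iff {k n n' : ℕ} {π : Perm n} {π' : Perm n'} {h : Fin k → Fin n}
    {h' : Fin k → Fin n'} : tupleProfile π h = tupleProfile π' h' ↔
      (∀ s t, h s < h t ↔ h' s < h' t) ∧ (∀ s t, π (h s) < π (h t) ↔ π' (h' s) < π' (h' t)) ∧
      (∀ s t, h s ⋖ h t ↔ h' s ⋖ h' t) ∧ (∀ s, IsMin (h s) ↔ IsMin (h' s)) ∧
      ∀ s, IsMax (h s) ↔ IsMax (h' s) := by
  simp [tupleProfile, funext_iff]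

/-- The set of configurations of the `k`-tuples of entries of `p`. -/
def patternType (k : ℕ) (p : SizedPerm) : Set (TupleProfile k) :=
  Set.range fun h : Fin k → Fin p.1 => tupleProfile p.2 h

theorem patternType_subset {k : ℕ} {p q : SizedPerm}
    (h : ∀ x : Fin k → Fin p.1, ∃ y : Fin k → Fin q.1, tupleProfile q.2 y = tupleProfile p.2 x) :
    patternType k p ⊆ patternType k q := by
  rintro _ ⟨x, rfl⟩
  exact h x

theorem patternType_mono {j k : ℕ} (hjk : j ≤ k) {p q : SizedPerm} (hp : 0 < p.1)
    (h : patternType k p ⊆ patternType k q) : patternType j p ⊆ patternType j q := by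
  refine patternType_subset fun x => ?_
  let X : Fin k → Fin p.1 := fun s => if hs : s.val < j then x ⟨s, hs⟩ else ⟨0, hp⟩
  have hX : ∀ s : Fin j, X (Fin.castLE hjk s) = x s := fun s => dif_pos s.2
  obtain ⟨Y, hY⟩ := h ⟨X, rfl⟩
  obtain ⟨h1, h2, h3, h4, h5⟩ := tupleProfile_eq_iff.mp hY
  refine ⟨fun s => Y (Fin.castLE hjk s), tupleProfile_eq_iff.mpr
    ⟨fun s t => ?_, fun s t => ?_, fun s t => ?_, fun s => ?_, fun s => ?_⟩⟩
  all_goals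
    simp only [← hX]
    first | exact h1 _ _ | exact h2 _ _ | exact h3 _ _ | exact h4 _ | exact h5 _

theorem Contains.of_patternType {k : ℕ} {p q τ : SizedPerm} (hp : 0 < p.1)
    (h : patternType k p ⊆ patternType k q) (hτ : τ.1 ≤ k) (hc : Contains τ.2 p.2) :
    Contains τ.2 q.2 := by
  obtain ⟨x, hx, hx'⟩ := hc
  obtain ⟨y, hy⟩ := patternType_mono hτ hp h ⟨x, rfl⟩
  obtain ⟨h1, h2, -⟩ := tupleProfile_eq_iff.mp hy
  exact ⟨y, fun s t hst => (h1 s t).mpr (hx hst), fun s t => (h2 s t).trans (hx' s t)⟩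

theorem Alternating.of_patternType {k : ℕ} {p q : SizedPerm} (hp : 0 < p.1) (hk : 3 ≤ k)
    (h : patternType k p ⊆ patternType k q) (hq : Alternating q.2) : Alternating p.2 := by
  intro i hi
  let x : Fin 3 → Fin p.1 := ![⟨i, by omega⟩, ⟨i + 1, by omega⟩, ⟨i + 2, hi⟩]
  obtain ⟨y, hy⟩ := patternType_mono hk hp h ⟨x, rfl⟩
  obtain ⟨-, h2, h3, -⟩ := tupleProfile_eq_iff.mp hy
  have hcov : ∀ {n : ℕ} (a b : Fin n), a ⋖ b ↔ a.val + 1 = b.val := fun a b => by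
    rw [Fin.covBy_iff, Nat.covBy_iff_add_one_eq]
  have e1 : (y 0).val + 1 = (y 1).val := (hcov _ _).mp ((h3 0 1).mpr ((hcov _ _).mpr rfl))
  have e2 : (y 1).val + 1 = (y 2).val := (hcov _ _).mp ((h3 1 2).mpr ((hcov _ _).mpr rfl))
  have := hq (y 0).val (by omega)
  have g1 : (⟨(y 0).val + 1, by omega⟩ : Fin q.1) = y 1 := Fin.ext e1
  have g2 : (⟨(y 0).val + 2, by omega⟩ : Fin q.1) = y 2 := Fin.ext (by simp only; omega)
  rw [g1, g2, Fin.eta, h2, h2, h2, h2] at this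
  exact this

theorem patternType_inflate_subset {k : ℕ} {σ : SizedPerm} {α α' : Fin σ.1 → SizedPerm}
    (hα : ∀ i, 0 < (α i).1) (hα' : ∀ i, 0 < (α' i).1)
    (h : ∀ i, patternType k (α i) ⊆ patternType k (α' i)) :
    patternType k (inflate σ α) ⊆ patternType k (inflate σ α') := by
  classical
  obtain ⟨f, hf, hb⟩ := (isInflation_inflate σ α).exists_isBlockMap hα
  obtain ⟨f', hf', hb'⟩ := (isInflation_inflate σ α').exists_isBlockMap hα'
  choose e he hv using hb
  choose e' he' hv' using hb'
  refine patternType_subset fun x => ?_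
  let z : ∀ i, Fin k → Fin (α i).1 := fun i s =>
    if hs : f (x s) = i then (e i).symm ⟨x s, hs⟩ else ⟨0, hα i⟩
  have hz : ∀ s i, f (x s) = i → x s = (e i (z i s)).1 := fun s i hs => by
    simp only [z, dif_pos hs, Equiv.apply_symm_apply]
  choose w hw using fun i => h i ⟨z i, rfl⟩
  have hw := fun i => tupleProfile_eq_iff.mp (hw i)
  let y : Fin k → Fin (inflate σ α').1 := fun s => (e' (f (x s)) (w (f (x s)) s)).1
  have hy : ∀ s i, f (x s) = i → y s = (e' i (w i s)).1 := by
    rintro s i rfl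
    rfl
  have hfy : ∀ s, f' (y s) = f (x s) := fun s => (e' (f (x s)) (w (f (x s)) s)).2
  refine ⟨y, tupleProfile_eq_iff.mpr ⟨fun s t => ?_, fun s t => ?_, fun s t => ?_, fun s => ?_,
    fun s => ?_⟩⟩
  · by_cases hst : f (x s) = f (x t)
    · obtain ⟨i, hi⟩ : ∃ i, f (x t) = i := ⟨_, rfl⟩
      rw [hz s i (hst.trans hi), hz t i hi, hy s i (hst.trans hi), hy t i hi]
      exact (he' _ _ _).symm.trans (((hw _).1 s t).trans (he i _ _))
    · have key : ∀ {n : ℕ} {g : Fin n → Fin σ.1} (hg : Monotone g) {a b : Fin n}, g a ≠ g b →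
          (a < b ↔ g a < g b) := fun hg _ _ hab =>
        ⟨fun h => lt_of_le_of_ne (hg h.le) hab, fun h => hg.reflect_lt h⟩
      rw [key hf.mono hst, key hf'.mono (by rwa [hfy, hfy]), hfy, hfy]
  · by_cases hst : f (x s) = f (x t)
    · obtain ⟨i, hi⟩ : ∃ i, f (x t) = i := ⟨_, rfl⟩
      rw [hz s i (hst.trans hi), hz t i hi, hy s i (hst.trans hi), hy t i hi]
      exact (hv' _ _ _).symm.trans (((hw _).2.1 s t).trans (hv _ _ _))
    · rw [hf.lt_iff _ _ hst, hf'.lt_iff _ _ (by rwa [hfy, hfy]), hfy, hfy]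
  · by_cases hst : f (x s) = f (x t)
    · obtain ⟨i, hi⟩ : ∃ i, f (x t) = i := ⟨_, rfl⟩
      rw [hz s i (hst.trans hi), hz t i hi, hy s i (hst.trans hi), hy t i hi,
        covBy_iff_of_same_block hf.mono (he _), covBy_iff_of_same_block hf'.mono (he' _)]
      exact (hw _).2.2.1 s t
    · rw [hz s _ rfl, hz t _ rfl, hy s _ rfl, hy t _ rfl,
        covBy_iff_of_ne_block hf.mono hf.surj (he _) (he _) hst,
        covBy_iff_of_ne_block hf'.mono hf'.surj (he' _) (he' _) hst,
        (hw _).2.2.2.1, (hw _).2.2.2.2]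
  · rw [hz s _ rfl, hy s _ rfl, isMin_iff_of_block hf.mono hf.surj (he _),
      isMin_iff_of_block hf'.mono hf'.surj (he' _), (hw _).2.2.2.1]
  · rw [hz s _ rfl, hy s _ rfl, isMax_iff_of_block hf.mono hf.surj (he _),
      isMax_iff_of_block hf'.mono hf'.surj (he' _), (hw _).2.2.2.2]

/-- The containment order on permutations of all lengths. -/
def Containment (p q : SizedPerm) : Prop := Contains p.2 q.2

instance : IsPreorder SizedPerm Containment where
  refl _ := ⟨id, strictMono_id, fun _ _ => Iff.rfl⟩
  trans _ _ _ := by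
    rintro ⟨f, hf, hf'⟩ ⟨g, hg, hg'⟩
    exact ⟨g ∘ f, hg.comp hf, fun s t => (hg' _ _).trans (hf' s t)⟩

theorem containment_of_size_le_one {p q : SizedPerm} (hp : p.1 ≤ 1) (hq : 0 < q.1) :
    Containment p q := by
  have : Subsingleton (Fin p.1) := Fin.subsingleton_iff_le_one.mpr hp
  exact ⟨fun _ => ⟨0, hq⟩, Subsingleton.strictMono _,
    fun s t => by simp [Subsingleton.elim s t]⟩

theorem containment_of_size_eq_zero {p q : SizedPerm} (hp : p.1 = 0) : Containment p q := by
  have : IsEmpty (Fin p.1) := ⟨fun a => by have := a.2; omega⟩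
  exact ⟨isEmptyElim, fun a => isEmptyElim a, fun a => isEmptyElim a⟩

theorem containment_inflate_inflate {σ : SizedPerm} {α α' : Fin σ.1 → SizedPerm}
    (h : ∀ i, Containment (α i) (α' i)) : Containment (inflate σ α) (inflate σ α') := by
  obtain ⟨e, he, hv⟩ := isInflation_inflate σ α
  obtain ⟨e', he', hv'⟩ := isInflation_inflate σ α'
  choose g hg hg' using h
  let F : (Σ i, Fin (α i).1) → Σ i, Fin (α' i).1 := fun x => ⟨x.1, g x.1 x.2⟩
  refine ⟨fun x => e'.symm (F (e x)), fun x y hxy => ?_, fun x y => ?_⟩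
  · rw [he] at hxy
    rw [he', e'.apply_symm_apply, e'.apply_symm_apply]
    revert hxy
    generalize e x = u
    generalize e y = v
    obtain ⟨i, a⟩ := u
    obtain ⟨j, b⟩ := v
    simp only [Prod.Lex.toLex_lt_toLex]
    rintro (h | ⟨h, h'⟩)
    · exact .inl h
    · subst h
      exact .inr ⟨rfl, hg i h'⟩
  · rw [hv, hv', e'.apply_symm_apply, e'.apply_symm_apply]
    generalize e x = u
    generalize e y = v
    obtain ⟨i, a⟩ := u
    obtain ⟨j, b⟩ := v
    by_cases hij : i = j
    · subst hij
      simpa [F, Prod.Lex.toLex_lt_toLex] using hg' i a b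
    · simp [F, Prod.Lex.toLex_lt_toLex, hij]

theorem containment_inflate_left {σ : SizedPerm} {α : Fin σ.1 → SizedPerm}
    (h : ∀ i, 0 < (α i).1) : Containment σ (inflate σ α) := by
  obtain ⟨f, hf, -⟩ := (isInflation_inflate σ α).exists_isBlockMap h
  exact hf.contains

theorem containment_inflate_block {σ : SizedPerm} {α : Fin σ.1 → SizedPerm}
    (h : ∀ i, 0 < (α i).1) (i : Fin σ.1) : Containment (α i) (inflate σ α) := by
  obtain ⟨f, -, hf⟩ := (isInflation_inflate σ α).exists_isBlockMap h
  exact (hf i).contains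

theorem size_block_lt {σ : SizedPerm} {α : Fin σ.1 → SizedPerm} (hσ : 2 ≤ σ.1)
    (h : ∀ i, 0 < (α i).1) (i : Fin σ.1) : (α i).1 < (inflate σ α).1 := by
  rw [size_inflate]
  have : Nontrivial (Fin σ.1) := Fin.nontrivial_iff_two_le.mpr hσ
  obtain ⟨j, hj⟩ := exists_ne i
  exact Finset.single_lt_sum (f := fun i => (α i).1) hj (Finset.mem_univ i) (Finset.mem_univ j) (h j)
    fun _ _ _ => Nat.zero_le _

/-- The permutations obtained by inflating elements of `S` by elements of `B`. -/
def inflations (S B : Set SizedPerm) : Set SizedPerm :=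
  ⋃ σ ∈ S, inflate σ '' Set.univ.pi fun _ => B

theorem mem_inflations {S B : Set SizedPerm} {p : SizedPerm} :
    p ∈ inflations S B ↔ ∃ σ ∈ S, ∃ α : Fin σ.1 → SizedPerm, (∀ i, α i ∈ B) ∧ inflate σ α = p := by
  simp [inflations, Set.mem_pi]

theorem partiallyWellOrderedOn_inflations {S B : Set SizedPerm} (hS : S.Finite)
    (hB : B.PartiallyWellOrderedOn Containment) :
    (inflations S B).PartiallyWellOrderedOn Containment := by
  have := (Finset.partiallyWellOrderedOn_bUnion (r := Containment) hS.toFinset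
    (f := fun σ => inflate σ '' Set.univ.pi fun _ => B)).mpr fun σ _ =>
      (Set.PartiallyWellOrderedOn.pi fun _ => hB).image_of_monotone_on
        fun _ _ _ _ h => containment_inflate_inflate h
  simpa [inflations] using this

theorem partiallyWellOrderedOn_of_minBadSeq {X : Type*} {r : X → X → Prop} [IsPreorder X r]
    {A : Set X} (hA : ∀ x ∈ A, ∀ y, r y x → y ∈ A) {rk : X → ℕ} {f : ℕ → X}
    (hf : Set.PartiallyWellOrderedOn.IsBadSeq r A f)
    (hmin : ∀ n, Set.PartiallyWellOrderedOn.IsMinBadSeq r rk A n f) :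
    {x | ∃ n, r x (f n) ∧ rk x < rk (f n)}.PartiallyWellOrderedOn r := by
  rw [Set.PartiallyWellOrderedOn.iff_forall_not_isBadSeq]
  rintro b ⟨hb, hbad⟩
  choose k hk hrk using hb
  obtain ⟨j, hj⟩ : ∃ j, ∀ i, k j ≤ k i :=
    ⟨Function.argmin k, fun i => Function.argmin_le k i⟩
  refine hmin (k j) (fun m => if m < k j then f m else b (j + (m - k j)))
    (fun m hm => (if_pos hm).symm) (by simpa using hrk j) ⟨fun n => ?_, fun m n hmn => ?_⟩
  · simp only
    split_ifs
    · exact hf.1 n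
    · exact hA _ (hf.1 _) _ (hk _)
  · simp only
    split_ifs with h1 h2 h2
    · exact hf.2 m n hmn
    · exact fun h => hf.2 m _ (h1.trans_le (hj _)) (_root_.trans h (hk _))
    · omega
    · exact hbad _ _ (by omega)

section PermClass

variable (C : ∀ n, Set (Perm n))

/-- The simple permutations of length at least two in a class. -/
def simples : Set SizedPerm := {p | p.2 ∈ C p.1 ∧ 2 ≤ p.1 ∧ IsSimple p.2}

/-- The elements of a class, of all lengths. -/
def elements : Set SizedPerm := {p | p.2 ∈ C p.1}

variable {C}

theorem FinitelyManySimples.finite_simples (hfin : FinitelyManySimples C) : (simples C).Finite :=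
  hfin.subset fun _ h => ⟨h.1, h.2.2⟩

theorem IsPermClass.mem_elements (hC : IsPermClass C) {p q : SizedPerm} (hq : q ∈ elements C)
    (h : Containment p q) : p ∈ elements C :=
  hC _ _ hq h

theorem IsPermClass.exists_isCanonical (hC : IsPermClass C) {p : SizedPerm} (hp : p ∈ elements C)
    (h2 : 2 ≤ p.1) : ∃ σ ∈ simples C, ∃ α : Fin σ.1 → SizedPerm, IsCanonical σ α ∧
      (∀ i, α i ∈ elements C) ∧ inflate σ α = p := by
  obtain ⟨σ, hσ, hs, α, hα, rfl⟩ := _root_.exists_isCanonical h2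
  exact ⟨σ, ⟨hC.mem_elements hp (containment_inflate_left hα.pos), hσ, hs⟩, α, hα,
    fun i => hC.mem_elements hp (containment_inflate_block hα.pos i), rfl⟩

theorem IsPermClass.partiallyWellOrderedOn (hC : IsPermClass C) (hfin : FinitelyManySimples C) :
    (elements C).PartiallyWellOrderedOn Containment := by
  rw [Set.PartiallyWellOrderedOn.iff_not_exists_isMinBadSeq (fun p : SizedPerm => p.1)]
  rintro ⟨f, hf, hmin⟩
  have h0 : ∀ n, 0 < (f n).1 := fun n => by
    by_contra h
    exact hf.2 n (n + 1) n.lt_succ_self (containment_of_size_eq_zero (by omega))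
  have h2 : ∀ n, 2 ≤ (f n).1 := fun n => by
    by_contra h
    exact hf.2 n (n + 1) n.lt_succ_self (containment_of_size_le_one (by omega) (h0 _))
  have hB := partiallyWellOrderedOn_of_minBadSeq (fun x hx y h => hC.mem_elements hx h) hf hmin
  have hD := partiallyWellOrderedOn_inflations hfin.finite_simples hB
  refine (Set.PartiallyWellOrderedOn.iff_forall_not_isBadSeq _ _).mp hD f ⟨fun n => ?_, hf.2⟩
  obtain ⟨σ, hσ, α, hα, -, h⟩ := hC.exists_isCanonical (hf.1 n) (h2 n)
  refine mem_inflations.mpr ⟨σ, hσ, α, fun i => ⟨n, ?_, ?_⟩, h⟩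
  · rw [← h]
    exact containment_inflate_block hα.pos i
  · simp only [← h]
    exact size_block_lt hσ.2.1 hα.pos i

theorem exists_bound_of_partiallyWellOrderedOn {D : Set SizedPerm}
    (hD : D.PartiallyWellOrderedOn Containment) (A : Set SizedPerm) :
    ∃ k, ∀ p ∈ D, p ∉ A → ∃ τ ∉ A, τ.1 ≤ k ∧ Containment τ p := by
  by_contra! hcon
  choose F hF hFA hFk using hcon
  let K : ℕ → ℕ := fun n => Nat.rec 0 (fun _ k => max k (F k).1) n
  have hK : ∀ n, K (n + 1) = max (K n) (F (K n)).1 := fun n => rfl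
  have hmono : Monotone K := monotone_nat_of_le_succ fun n => by rw [hK]; exact le_max_left _ _
  obtain ⟨m, n, hmn, h⟩ := hD.exists_lt (f := fun n => F (K n)) fun n => hF _
  exact hFk _ _ (hFA _) ((le_max_right _ _).trans ((hK m).ge.trans (hmono hmn))) h

end PermClass

theorem finite_size_fiber {X : Type*} (F : X → SizedPerm) (hF : Function.Injective F) {s : X → ℕ}
    (hs : ∀ x, (F x).1 = s x) (n : ℕ) : Finite {x // s x = n} := by
  have hfin : {p : SizedPerm | p.1 = n}.Finite := by
    refine (Set.finite_range fun π : Perm n => (⟨n, π⟩ : SizedPerm)).subset ?_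
    rintro ⟨_, π⟩ rfl
    exact ⟨π, rfl⟩
  have := hfin.to_subtype
  refine Finite.of_injective (β := {p : SizedPerm | p.1 = n})
    (fun x => ⟨F x.1, (hs _).trans x.2⟩) fun x y h => ?_
  exact Subtype.ext (hF (congrArg Subtype.val h))

section System

variable {C : ∀ n, Set (Perm n)} {T : Type} (ty : SizedPerm → T)

/-- The nonempty elements of a class having a given type. -/
abbrev ElementsOfType (C : ∀ n, Set (Perm n)) (ty : SizedPerm → T) (t : T) : Type :=
  {p : SizedPerm // p ∈ elements C ∧ 0 < p.1 ∧ ty p = t}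

/-- A type function is compatible with a class if the types of the blocks of an inflation of a
simple permutation determine the type of the inflation, its membership in the class, and
whether it is canonical. -/
def IsCompatible (C : ∀ n, Set (Perm n)) (ty : SizedPerm → T) : Prop :=
  ∀ σ ∈ simples C, ∀ α α' : Fin σ.1 → SizedPerm, (∀ i, α i ∈ elements C) →
    (∀ i, α' i ∈ elements C) → (∀ i, 0 < (α' i).1) → (∀ i, ty (α i) = ty (α' i)) →
    IsCanonical σ α → inflate σ α ∈ elements C →
    IsCanonical σ α' ∧ inflate σ α' ∈ elements C ∧ ty (inflate σ α') = ty (inflate σ α)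

/-- The simple permutations and types of blocks whose canonical inflations have type `t`. -/
abbrev InflationRule (C : ∀ n, Set (Perm n)) (ty : SizedPerm → T) (t : T) : Type :=
  {g : Σ σ : simples C, Fin σ.1.1 → T // ∃ α : Fin g.1.1.1 → SizedPerm,
    (∀ i, α i ∈ elements C) ∧ IsCanonical g.1.1 α ∧ inflate g.1.1 α ∈ elements C ∧
    ty (inflate g.1.1 α) = t ∧ ∀ i, ty (α i) = g.2 i}

variable {ty} {t : T}

theorem IsCompatible.spec (hty : IsCompatible C ty) (g : InflationRule C ty t)
    (β : ∀ i, ElementsOfType C ty (g.1.2 i)) :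
    IsCanonical g.1.1.1 (fun i => (β i).1) ∧ inflate g.1.1.1 (fun i => (β i).1) ∈ elements C ∧
      ty (inflate g.1.1.1 fun i => (β i).1) = t := by
  obtain ⟨α, h1, h2, h3, h4, h5⟩ := g.2
  have := hty _ g.1.1.2 α (fun i => (β i).1) h1 (fun i => (β i).2.1) (fun i => (β i).2.2.1)
    (fun i => (h5 i).trans (β i).2.2.2.symm) h2 h3
  exact ⟨this.1, this.2.1, this.2.2.trans h4⟩

/-- The permutation obtained from a rule by choosing blocks of the required types. -/
noncomputable def ruleInflate (x : Σ g : InflationRule C ty t, ∀ i, ElementsOfType C ty (g.1.2 i)) :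
    SizedPerm :=
  inflate x.1.1.1.1 fun i => (x.2 i).1

theorem IsCompatible.ruleInflate_injective (hty : IsCompatible C ty) :
    Function.Injective (ruleInflate (C := C) (ty := ty) (t := t)) := by
  rintro ⟨g, β⟩ ⟨g', β'⟩ h
  have heq := IsCanonical.unique g.1.1.2.2.2 g'.1.1.2.2.2 g.1.1.2.2.1 g'.1.1.2.2.1
    (hty.spec g β).1 (hty.spec g' β').1 h
  obtain ⟨⟨⟨σ, hσ⟩, τ⟩, hg⟩ := g
  obtain ⟨⟨⟨σ', hσ'⟩, τ'⟩, hg'⟩ := g'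
  simp only at β β' heq
  obtain rfl : σ = σ' := congrArg Sigma.fst heq
  have hα : (fun i => (β i).1) = fun i => (β' i).1 := eq_of_heq (Sigma.mk.inj heq).2
  obtain rfl : τ = τ' := funext fun i =>
    (β i).2.2.2.symm.trans ((congrArg ty (congrFun hα i)).trans (β' i).2.2.2)
  obtain rfl : β = β' := funext fun i => Subtype.ext (congrFun hα i)
  rfl

theorem IsCompatible.two_le_size (hty : IsCompatible C ty)
    (x : Σ g : InflationRule C ty t, ∀ i, ElementsOfType C ty (g.1.2 i)) :
    2 ≤ (ruleInflate x).1 := by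
  have h2 : 2 ≤ x.1.1.1.1.1 := x.1.1.1.2.2.1
  have h := (hty.spec x.1 x.2).1.pos ⟨0, by omega⟩
  have := size_block_lt h2 (hty.spec x.1 x.2).1.pos ⟨0, by omega⟩
  unfold ruleInflate
  omega

theorem IsCompatible.isAlgebraic [Finite T] (hC : IsPermClass C) (hfin : FinitelyManySimples C)
    (hty : IsCompatible C ty) (t : T) :
    IsAlgebraic (Polynomial ℚ) (sizeGenFun fun p : ElementsOfType C ty t => p.1.1) := by
  classical
  have := Fintype.ofFinite T
  have := hfin.finite_simples.to_subtype
  have (t : T) : Fintype (InflationRule C ty t) := Fintype.ofFinite _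
  have hfiber (t : T) (n : ℕ) : Finite {p : ElementsOfType C ty t // p.1.1 = n} :=
    finite_size_fiber Subtype.val Subtype.val_injective (fun _ => rfl) n
  have hfiber' (t : T) (n : ℕ) :
      Finite {p : {p : ElementsOfType C ty t // p.1.1 = 1} // p.1.1.1 = n} :=
    finite_size_fiber (Subtype.val ∘ Subtype.val) (Subtype.val_injective.comp Subtype.val_injective)
      (fun _ => rfl) n
  have hsize (t : T) (x : Σ g : InflationRule C ty t, ∀ i, ElementsOfType C ty (g.1.2 i)) :
      (ruleInflate x).1 = ∑ i, (x.2 i).1.1 := size_inflate _ _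
  have hfiber_sigma (t : T) (n : ℕ) :
      Finite {x : Σ g : InflationRule C ty t, ∀ i, ElementsOfType C ty (g.1.2 i) //
        ∑ i, (x.2 i).1.1 = n} :=
    finite_size_fiber ruleInflate hty.ruleInflate_injective (hsize t) n
  have hfiber_pi (t : T) (g : InflationRule C ty t) (n : ℕ) :
      Finite {β : ∀ i, ElementsOfType C ty (g.1.2 i) // ∑ i, (β i).1.1 = n} :=
    finite_size_fiber (fun β => ruleInflate ⟨g, β⟩)
      (hty.ruleInflate_injective.comp sigma_mk_injective) (fun β => hsize t ⟨g, β⟩) n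
  refine isAlgebraic_of_system (ι := InflationRule C ty) (m := fun t g => g.1.1.1.1)
    (fun t g => g.1.1.2.2.1) (fun t g => g.1.2)
    (fun t => sizeGenFun fun p : ElementsOfType C ty t => p.1.1)
    (fun t => Polynomial.C (Nat.card {p : ElementsOfType C ty t // p.1.1 = 1} : ℚ) * Polynomial.X)
    (fun t => ?_) (fun t => ?_) t
  · have : IsEmpty {p : ElementsOfType C ty t // p.1.1 = 0} :=
      ⟨fun p => p.1.2.2.1.ne' p.2⟩
    rw [← PowerSeries.coeff_zero_eq_constantCoeff_apply]
    simp [sizeGenFun]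
  · rw [← sizeGenFun_eq_of_size_one
      (fun p : {p : ElementsOfType C ty t // p.1.1 = 1} => p.1.1.1) fun p => p.2]
    have hprod (g : InflationRule C ty t) :
        (∏ i, sizeGenFun fun p : ElementsOfType C ty (g.1.2 i) => p.1.1) =
          sizeGenFun fun β : ∀ i, ElementsOfType C ty (g.1.2 i) => ∑ i, (β i).1.1 :=
      (sizeGenFun_pi fun i (p : ElementsOfType C ty (g.1.2 i)) => p.1.1).symm
    simp only [hprod]
    rw [← sizeGenFun_sigma
      (fun (g : InflationRule C ty t) (β : ∀ i, ElementsOfType C ty (g.1.2 i)) =>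
        ∑ i, (β i).1.1), ← sizeGenFun_sum]
    symm
    refine sizeGenFun_congr (Sum.elim (fun p => p.1)
      fun x => ⟨ruleInflate x, (hty.spec x.1 x.2).2.1,
        (hty.two_le_size x).trans' Nat.zero_lt_two, (hty.spec x.1 x.2).2.2⟩) ⟨?_, ?_⟩ ?_
    · refine Function.Injective.sumElim Subtype.val_injective
        (fun x y h => hty.ruleInflate_injective (congrArg Subtype.val h)) fun p x h => ?_
      have h1 := p.2
      have h2 := hty.two_le_size x
      have h3 : p.1.1 = ruleInflate x := congrArg Subtype.val h
      rw [h3] at h1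
      omega
    · intro p
      by_cases hp : p.1.1 = 1
      · exact ⟨.inl ⟨p, hp⟩, rfl⟩
      · obtain ⟨p, hpC, hpos, hpt⟩ := p
        obtain ⟨σ, hσ, α, hα, hαC, rfl⟩ := hC.exists_isCanonical hpC (by simp only at hp; omega)
        exact ⟨.inr ⟨⟨⟨⟨σ, hσ⟩, fun i => ty (α i)⟩, α, hαC, hα, hpC, hpt, fun i => rfl⟩,
          fun i => ⟨α i, hαC i, hα.pos i, rfl⟩⟩, rfl⟩
    · rintro (p | x)
      · rfl
      · exact hsize t x

end System

theorem genFun_eq_sizeGenFun (S : ∀ n, Set (Perm n)) :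
    genFun S = sizeGenFun fun p : {p : SizedPerm // p.2 ∈ S p.1 ∧ 0 < p.1} => p.1.1 := by
  ext n
  simp only [genFun, sizeGenFun, PowerSeries.coeff_mk]
  split_ifs with hn
  · subst hn
    have : IsEmpty {p : {p : SizedPerm // p.2 ∈ S p.1 ∧ 0 < p.1} // p.1.1 = 0} :=
      ⟨fun p => p.1.2.2.ne' p.2⟩
    simp
  · congr 1
    refine Nat.card_congr (Equiv.ofBijective
      (fun π => ⟨⟨⟨n, π.1⟩, π.2, Nat.pos_of_ne_zero hn⟩, rfl⟩) ⟨fun π ρ h => ?_, ?_⟩)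
    · simpa [Subtype.ext_iff] using h
    · rintro ⟨⟨⟨_, π⟩, hπ, _⟩, rfl⟩
      exact ⟨⟨π, hπ⟩, rfl⟩

theorem IsAlgebraic.isAlgebraicOverQx {f : PowerSeries ℚ} (hf : IsAlgebraic (Polynomial ℚ) f) :
    IsAlgebraicOverQx f := by
  obtain ⟨P, hP, h⟩ := hf
  exact ⟨P, hP, h⟩

/-- The type of a permutation with respect to a class: the configurations of its `k`-tuples of
entries and the simple permutations of which it is an inflation. -/
def classType (C : ∀ n, Set (Perm n)) (k : ℕ) (p : SizedPerm) :
    Set (TupleProfile k) × Set (simples C) :=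
  (patternType k p, {σ | IsInflationOf p σ.1})

theorem exists_isCompatible_classType {C : ∀ n, Set (Perm n)} (hC : IsPermClass C)
    (hfin : FinitelyManySimples C) : ∃ k, 3 ≤ k ∧ IsCompatible C (classType C k) := by
  obtain ⟨k, hk⟩ := exists_bound_of_partiallyWellOrderedOn
    (partiallyWellOrderedOn_inflations hfin.finite_simples (hC.partiallyWellOrderedOn hfin))
    (elements C)
  refine ⟨max 3 k, le_max_left _ _, fun σ hσ α α' hαC hα'C hpos hty hα hmem => ?_⟩
  have hpat := fun i => congrArg Prod.fst (hty i)
  have hsub := patternType_inflate_subset hα.pos hpos fun i => (hpat i).le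
  have hsub' := patternType_inflate_subset hpos hα.pos fun i => (hpat i).ge
  refine ⟨⟨hpos, fun h2 i hi hd => hα.not_isInflationOf h2 i hi ?_⟩, ?_, ?_⟩
  · have : (⟨σ, hσ⟩ : simples C) ∈ (classType C (max 3 k) (α' i)).2 := hd
    rwa [← hty] at this
  · by_contra hnot
    obtain ⟨τ, hτ, hτk, hc⟩ := hk _ (mem_inflations.mpr ⟨σ, hσ, α', hα'C, rfl⟩) hnot
    have hsize := size_block_lt hσ.2.1 hpos ⟨0, hσ.2.1.trans' Nat.zero_lt_two⟩
    exact hτ (hC.mem_elements hmem (Contains.of_patternType (hsize.trans_le' (Nat.zero_le _))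
      hsub' (hτk.trans (le_max_right _ _)) hc))
  · refine Prod.ext (hsub'.antisymm hsub) (Set.ext fun ρ => ?_)
    exact (isInflationOf_inflate_iff hσ.2.2 ρ.2.2.2 hσ.2.1 ρ.2.2.1 hpos).trans
      (isInflationOf_inflate_iff hσ.2.2 ρ.2.2.2 hσ.2.1 ρ.2.2.1 hα.pos).symm

/-- If `C` is a permutation class containing only finitely many simple permutations,
then the generating function of the set of alternating permutations in `C`
is algebraic over `ℚ[x]`. -/
theorem statement1 (C : ∀ n, Set (Perm n)) (hC : IsPermClass C)
    (hfin : FinitelyManySimples C) :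
    IsAlgebraicOverQx (genFun fun n => {π : Perm n | π ∈ C n ∧ Alternating π}) := by
  classical
  obtain ⟨k, hk, hty⟩ := exists_isCompatible_classType hC hfin
  have := hfin.finite_simples.to_subtype
  have := Fintype.ofFinite {t // ∃ p : SizedPerm, 0 < p.1 ∧ Alternating p.2 ∧ classType C k p = t}
  set T := {t // ∃ p : SizedPerm, 0 < p.1 ∧ Alternating p.2 ∧ classType C k p = t}
  have hfiber (t : T) (n : ℕ) :
      Finite {p : ElementsOfType C (classType C k) t.1 // p.1.1 = n} :=
    finite_size_fiber Subtype.val Subtype.val_injective (fun _ => rfl) n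
  apply IsAlgebraic.isAlgebraicOverQx
  have hsum : (genFun fun n => {π : Perm n | π ∈ C n ∧ Alternating π}) =
      ∑ t : T, sizeGenFun fun p : ElementsOfType C (classType C k) t.1 => p.1.1 := by
    rw [genFun_eq_sizeGenFun,
      ← sizeGenFun_sigma fun (t : T) (p : ElementsOfType C (classType C k) t.1) => p.1.1]
    symm
    refine sizeGenFun_congr (fun x => ⟨x.2.1, ⟨x.2.2.1, ?_⟩, x.2.2.2.1⟩) ⟨?_, ?_⟩ fun _ => rfl
    · obtain ⟨⟨t, q, -, hq, hqt⟩, p, -, hp, hpt⟩ := x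
      exact hq.of_patternType hp hk (congrArg Prod.fst (hpt.trans hqt.symm)).le
    · rintro ⟨⟨t, ht⟩, p, hpC, hpos, hpt⟩ ⟨⟨t', ht'⟩, p', hpC', hpos', hpt'⟩ h
      obtain rfl : p = p' := congrArg Subtype.val h
      obtain rfl : t = t' := hpt.symm.trans hpt'
      rfl
    · rintro ⟨p, ⟨hpC, hp⟩, hpos⟩
      exact ⟨⟨⟨_, p, hpos, hp, rfl⟩, p, hpC, hpos, rfl⟩, rfl⟩
  rw [hsum]
  exact sum_mem (S := Subalgebra.algebraicClosure (Polynomial ℚ) (PowerSeries ℚ))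
    fun t _ => hty.isAlgebraic hC hfin t.1
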